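/- arXiv:2010.13208 — 11 statements merged into one kernel-verified Lean document; each statement's English description precedes it below -/
import Mathlib

section
/- Let 𝒞 be an abelian category and let 𝒜 be a deflation-closed full additive subcategory of 𝒞. Then for every short exact sequence 0 → X → Y →^g Z → 0 in 𝒞 with Y and Z in 𝒜 and every morphism f : A → Z with A in 𝒜, the pullback of g along f lies in 𝒜. (This is the abelian-category case of the statement that a deflation-closed subcategory inherits a deflation-exact structure.) -/
/-!
A commutative square with corner `P` over a cospan `g : Y ⟶ Z`, `f : A ⟶ Z` is a pullback exactly
when `P` is the kernel of the difference map `(g, -f) : Y ⊞ A ⟶ Z`. This map is an epimorphism as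
soon as `g` and `f` are jointly epic, in particular when `g` is epic, and then
`0 ⟶ P ⟶ Y ⊞ A ⟶ Z ⟶ 0` is short exact, so deflation-closedness puts `P` in `𝒜`.
-/

open CategoryTheory CategoryTheory.Limits ZeroObject

universe v u

variable {C : Type u} [Category.{v} C] [Abelian C]

/-- A full additive subcategory of `C`, given as a predicate on objects:
closed under isomorphisms, containing the zero object, closed under binary biproducts. -/
structure IsAdditiveClosed (𝒜 : C → Prop) : Prop where
  iso : ∀ {X Y : C}, (X ≅ Y) → 𝒜 X → 𝒜 Y
  zero : 𝒜 0
  biprod : ∀ {X Y : C}, 𝒜 X → 𝒜 Y → 𝒜 (X ⊞ Y)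

/-- `𝒜` is deflation-closed: for every short exact sequence `0 → X → Y → Z → 0`
with `Y, Z ∈ 𝒜`, also `X ∈ 𝒜`. -/
def DeflationClosed (𝒜 : C → Prop) : Prop :=
  ∀ (S : ShortComplex C), S.ShortExact → 𝒜 S.X₂ → 𝒜 S.X₃ → 𝒜 S.X₁

/-- Axiom (PR2): every object of `C` admits an epimorphism from an object of `𝒜`. -/
def PR2 (𝒜 : C → Prop) : Prop :=
  ∀ E : C, ∃ (A : C) (f : A ⟶ E), 𝒜 A ∧ Epi f

theorem epi_biprod_desc_neg {D : Type*} [Category* D] [Preadditive D] {X Y Z : D}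
    [HasBinaryBiproduct X Y] (f : X ⟶ Z) (g : Y ⟶ Z) [Epi (biprod.desc f g)] :
    Epi (biprod.desc f (-g)) := by
  refine Preadditive.epi_of_cancel_zero _ fun h hh => ?_
  have hf : f ≫ h = 0 := by simpa using biprod.inl ≫= hh
  have hg : g ≫ h = 0 := by simpa using biprod.inr ≫= hh
  rw [← cancel_epi (biprod.desc f g), comp_zero]
  ext <;> simp [hf, hg]

theorem shortExact_shortComplex'_of_isPullback {P Y A Z : C} {fst : P ⟶ Y} {snd : P ⟶ A}
    {g : Y ⟶ Z} {f : A ⟶ Z} (sq : IsPullback fst snd g f) [Epi (biprod.desc g f)] :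
    sq.shortComplex'.ShortExact where
  exact := sq.exact_shortComplex'
  mono_f := sq.mono_shortComplex'_f
  epi_g := epi_biprod_desc_neg g f

theorem deflationClosed_pullback_mem_general {𝒜 : C → Prop} (hdef : DeflationClosed 𝒜)
    {P Y A Z : C} {fst : P ⟶ Y} {snd : P ⟶ A} {g : Y ⟶ Z} {f : A ⟶ Z}
    (sq : IsPullback fst snd g f) [Epi (biprod.desc g f)] (hYA : 𝒜 (Y ⊞ A)) (hZ : 𝒜 Z) :
    𝒜 P :=
  hdef sq.shortComplex' (shortExact_shortComplex'_of_isPullback sq) hYA hZ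

/-- A deflation-closed full additive subcategory of an abelian category is closed under
pullbacks of the epimorphism of a short exact sequence along morphisms from objects of `𝒜`. -/
theorem deflationClosed_pullback_mem
    (𝒜 : C → Prop) (hadd : IsAdditiveClosed 𝒜) (hdef : DeflationClosed 𝒜)
    {X Y Z : C} (i : X ⟶ Y) (g : Y ⟶ Z) (w : i ≫ g = 0)
    (hse : (ShortComplex.mk i g w).ShortExact)
    (hY : 𝒜 Y) (hZ : 𝒜 Z)
    {A : C} (f : A ⟶ Z) (hA : 𝒜 A) :
    𝒜 (pullback g f) := by
  have : Epi g := hse.epi_g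
  exact deflationClosed_pullback_mem_general hdef (.of_hasPullback g f) (hadd.biprod hY hA) hZ
end

section
/- Let 𝒞 be an abelian category and let 𝒜 be a deflation-closed full additive subcategory of 𝒞. Let A• be a bounded-above cochain complex (A^k = 0 for all k greater than some bound) all of whose terms lie in 𝒜. If A• is acyclic in 𝒞, then for every n the kernel of the differential d^n : A^n → A^{n+1} (equivalently, the image of every differential) lies in 𝒜. -/
open CategoryTheory CategoryTheory.Limits ZeroObject

universe v u

variable {C : Type u} [Category.{v} C] [Abelian C]

/-!
Breaking the acyclic complex into the short exact sequences
`0 ⟶ im dⁿ ⟶ Aⁿ⁺¹ ⟶ im dⁿ⁺¹ ⟶ 0` shows that `im dⁿ ∈ 𝒜` as soon as `im dⁿ⁺¹ ∈ 𝒜`. Since the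
images vanish in high degrees and `0 ∈ 𝒜`, descending induction puts all of them in `𝒜`, and then
`0 ⟶ ker dⁿ ⟶ Aⁿ ⟶ im dⁿ ⟶ 0` does the same for the kernels.
-/

lemma shortExact_factorThruImage {X Y : C} {f : X ⟶ Y} {c : KernelFork f} (hc : IsLimit c) :
    (ShortComplex.mk c.ι (factorThruImage f)
      (by simp [← cancel_mono (image.ι f)])).ShortExact where
  exact := ShortComplex.exact_of_f_is_kernel _ (isKernelOfComp _ _ hc _ (image.fac f))
  mono_f := mono_of_isLimit_fork hc

namespace DeflationClosed

variable {𝒜 : C → Prop}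

lemma mem_of_isZero (hdef : DeflationClosed 𝒜) {X Z : C} (hX : 𝒜 X) (hZ : IsZero Z) : 𝒜 Z :=
  have shortExact : (ShortComplex.mk (0 : Z ⟶ X) (𝟙 X) zero_comp).ShortExact :=
    { exact := (ShortComplex.exact_iff_mono _ rfl).2 inferInstance
      mono_f := hZ.mono _ }
  hdef _ shortExact hX hX

lemma mem_of_isLimit_kernelFork (hdef : DeflationClosed 𝒜) {X Y : C} {f : X ⟶ Y}
    {c : KernelFork f} (hc : IsLimit c) (hX : 𝒜 X) (hf : 𝒜 (image f)) : 𝒜 c.pt :=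
  hdef _ (shortExact_factorThruImage hc) hX hf

lemma image_mem_of_exact (hdef : DeflationClosed 𝒜) {S : ShortComplex C} (hS : S.Exact)
    (hX₂ : 𝒜 S.X₂) (hg : 𝒜 (image S.g)) : 𝒜 (image S.f) :=
  hdef.mem_of_isLimit_kernelFork hS.isLimitImage' hX₂ hg

lemma image_d_mem_of_le (hdef : DeflationClosed 𝒜) {A : CochainComplex C ℤ}
    (hterms : ∀ k, 𝒜 (A.X k)) (hacy : A.Acyclic) {n m : ℤ} (hnm : n ≤ m)
    (hm : 𝒜 (image (A.d m (m + 1)))) : 𝒜 (image (A.d n (n + 1))) := by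
  induction n, hnm using Int.leInductionDown with
  | base => exact hm
  | pred k _ ih =>
    rw [Int.sub_add_cancel]
    have exact_at_k : (A.sc' (k - 1) k (k + 1)).Exact :=
      (A.exactAt_iff' _ _ _ (by simp) (by simp)).1 (hacy k)
    exact hdef.image_mem_of_exact exact_at_k (hterms k) ih

end DeflationClosed

theorem kernel_mem_of_acyclic_boundedAbove_general
    (𝒜 : C → Prop) (hdef : DeflationClosed 𝒜)
    (A : CochainComplex C ℤ) (b : ℤ) (hb : ∀ k : ℤ, b < k → IsZero (A.X k))
    (hterms : ∀ k : ℤ, 𝒜 (A.X k)) (hacy : ∀ k : ℤ, A.ExactAt k) (n : ℤ) :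
    𝒜 (kernel (A.d n (n + 1))) ∧ 𝒜 (image (A.d n (n + 1))) := by
  have image_isZero : IsZero (image (A.d (max n b) (max n b + 1))) :=
    (hb _ (by omega)).of_mono (image.ι _)
  have image_mem : 𝒜 (image (A.d n (n + 1))) :=
    hdef.image_d_mem_of_le hterms hacy (le_max_left n b)
      (hdef.mem_of_isZero (hterms n) image_isZero)
  have kernel_mem : 𝒜 (kernel (A.d n (n + 1))) :=
    hdef.mem_of_isLimit_kernelFork (limit.isLimit _) (hterms n) image_mem
  exact ⟨kernel_mem, image_mem⟩

/-- If `𝒜` is deflation-closed and `A•` is a bounded-above acyclic cochain complex all of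
whose terms lie in `𝒜`, then every kernel of a differential of `A•` lies in `𝒜`. -/
theorem kernel_mem_of_acyclic_boundedAbove
    (𝒜 : C → Prop) (hadd : IsAdditiveClosed 𝒜) (hdef : DeflationClosed 𝒜)
    (A : CochainComplex C ℤ) (b : ℤ) (hb : ∀ k : ℤ, b < k → IsZero (A.X k))
    (hterms : ∀ k : ℤ, 𝒜 (A.X k)) (hacy : ∀ k : ℤ, A.ExactAt k) (n : ℤ) :
    𝒜 (kernel (A.d n (n + 1))) ∧ 𝒜 (image (A.d n (n + 1))) :=
  kernel_mem_of_acyclic_boundedAbove_general 𝒜 hdef A b hb hterms hacy n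
end

section
/- Let 𝒞 be an abelian category and let 𝒜 be a full additive subcategory satisfying (PR2). Then for every cochain complex E• with E^k = 0 for all k > b (for some integer b), there exist a cochain complex A• with A^k = 0 for all k > b and all terms A^k in 𝒜, and a chain map f : A• → E• which is a quasi-isomorphism. -/
open CategoryTheory CategoryTheory.Limits ZeroObject

universe v u

variable {C : Type u} [Category.{v} C] [Abelian C]

/-!
The resolution is built downwards from degree `b`. Given `A ⟶ E` in degrees `≥ k`, choose an
epimorphism onto `Zᵏ(A) ×_{Eᵏ} Eᵏ⁻¹` from an object of `𝒜`. Every cocycle of `A` that becomes a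
coboundary in `E` is then locally a coboundary in `A`, while lifting the pairs `(0, e)` shows that
every cocycle `e` of `E` is locally the image of a cocycle of `A`.
-/

section LiftsUpToRefinement

variable {W X Y F F' : C}

/-- For a commutative square `f' ≫ e = d' ≫ f` with `d' ≫ d = 0`, this says that the induced map
`W ⟶ ker d ×_F F'` is an epimorphism, expressed on generalized elements: these lift to `W` after
precomposition with an epimorphism. This is the condition imposed at each step of the resolution,
and it controls the map induced on homology. -/
def LiftsUpToRefinement (d' : W ⟶ X) (f' : W ⟶ F') (d : X ⟶ Y) (f : X ⟶ F) (e : F' ⟶ F) : Prop :=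
  ∀ ⦃T : C⦄ (x : T ⟶ X) (y : T ⟶ F'), x ≫ d = 0 → x ≫ f = y ≫ e →
    ∃ (T' : C) (π : T' ⟶ T) (_ : Epi π) (w : T' ⟶ W), π ≫ x = w ≫ d' ∧ π ≫ y = w ≫ f'

lemma liftsUpToRefinement_of_epi (d : X ⟶ Y) (f : X ⟶ F) (e : F' ⟶ F)
    (p : W ⟶ pullback (kernel.ι d ≫ f) e) [Epi p] :
    LiftsUpToRefinement (p ≫ pullback.fst _ _ ≫ kernel.ι d) (p ≫ pullback.snd _ _) d f e := by
  intro T x y hx hxy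
  obtain ⟨T', π, hπ, w, hw⟩ := surjective_up_to_refinements_of_epi p
    (pullback.lift (kernel.lift d x hx) y (by rwa [kernel.lift_ι_assoc]))
  refine ⟨T', π, hπ, w, ?_, ?_⟩
  · simpa only [Category.assoc, pullback.lift_fst_assoc, kernel.lift_ι] using
      hw =≫ (pullback.fst _ _ ≫ kernel.ι d)
  · simpa only [Category.assoc, pullback.lift_snd] using hw =≫ pullback.snd _ _

lemma PR2.exists_liftsUpToRefinement {𝒜 : C → Prop} (h : PR2 𝒜)
    (d : X ⟶ Y) (f : X ⟶ F) (e : F' ⟶ F) :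
    ∃ (A : C) (d' : A ⟶ X) (f' : A ⟶ F'), 𝒜 A ∧ d' ≫ d = 0 ∧ f' ≫ e = d' ≫ f ∧
      LiftsUpToRefinement d' f' d f e := by
  obtain ⟨A, p, hA, _⟩ := h (pullback (kernel.ι d ≫ f) e)
  refine ⟨A, p ≫ pullback.fst _ _ ≫ kernel.ι d, p ≫ pullback.snd _ _, hA, ?_, ?_,
    liftsUpToRefinement_of_epi d f e p⟩
  · simp only [Category.assoc, kernel.condition, comp_zero]
  · simp only [Category.assoc, pullback.condition]

end LiftsUpToRefinement

section Homology

variable {ι : Type*} {c : ComplexShape ι} {K L : HomologicalComplex C c} (φ : K ⟶ L)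

lemma LiftsUpToRefinement.mono_homologyMap {i j : ι} (hij : c.Rel i j)
    (h : LiftsUpToRefinement (K.d i j) (φ.f i) (K.d j (c.next j)) (φ.f j) (L.d i j)) :
    Mono (HomologicalComplex.homologyMap φ j) := by
  rw [HomologicalComplex.mono_homologyMap_iff_up_to_refinements φ i j _ (c.prev_eq' hij) rfl]
  intro T x hx y hxy
  obtain ⟨T', π, hπ, w, hw, -⟩ := h x y hx hxy
  exact ⟨T', π, hπ, w, hw⟩

lemma LiftsUpToRefinement.epi_homologyMap {i j : ι} (hij : c.Rel i j)
    (h : LiftsUpToRefinement (K.d i j) (φ.f i) (K.d j (c.next j)) (φ.f j) (L.d i j)) :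
    Epi (HomologicalComplex.homologyMap φ i) := by
  rw [HomologicalComplex.epi_homologyMap_iff_up_to_refinements φ _ i j rfl (c.next_eq' hij)]
  intro T y hy
  obtain ⟨T', π, hπ, w, hw, hw'⟩ := h 0 y zero_comp (by rw [zero_comp, hy])
  exact ⟨T', π, hπ, w, by rw [← hw, comp_zero], 0, by rw [hw', zero_comp, add_zero]⟩

lemma epi_homologyMap_of_d_eq_zero {i j : ι} (hij : c.next i = j) (hd : K.d i j = 0)
    [Epi (φ.f i)] : Epi (HomologicalComplex.homologyMap φ i) := by
  rw [HomologicalComplex.epi_homologyMap_iff_up_to_refinements φ _ i j rfl hij]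
  intro T y _
  obtain ⟨T', π, hπ, x, hx⟩ := surjective_up_to_refinements_of_epi (φ.f i) y
  exact ⟨T', π, hπ, x, by rw [hd, comp_zero], 0, by rw [hx, zero_comp, add_zero]⟩

end Homology

section ChainComplex

lemma quasiIso_of_liftsUpToRefinement {K L : ChainComplex C ℕ} (φ : K ⟶ L) [Epi (φ.f 0)]
    (h : ∀ n, LiftsUpToRefinement (K.d (n + 1) n) (φ.f (n + 1))
      (K.d n ((ComplexShape.down ℕ).next n)) (φ.f n) (L.d (n + 1) n)) :
    QuasiIso φ := by
  refine ⟨fun n => ?_⟩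
  rw [quasiIsoAt_iff_isIso_homologyMap]
  have : Mono (HomologicalComplex.homologyMap φ n) := (h n).mono_homologyMap φ rfl
  have : Epi (HomologicalComplex.homologyMap φ n) := by
    cases n with
    | zero => exact epi_homologyMap_of_d_eq_zero φ rfl (K.shape _ _ (by simp))
    | succ n => exact (h n).epi_homologyMap φ rfl
  exact isIso_of_mono_of_epi _

/-- The degree `n` part of a chain complex over `E` under construction: its object `X`, the
differential `d` out of it, and the comparison map `f`. The target `Y` of `d` is the object in
degree `n - 1`; in degree `0` it is arbitrary and `d = 0`. -/
structure ResolutionStage (E : ChainComplex C ℕ) (n : ℕ) where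
  X : C
  Y : C
  d : X ⟶ Y
  f : X ⟶ E.X n

lemma PR2.exists_quasiIso_chainComplex {𝒜 : C → Prop} (h : PR2 𝒜) (E : ChainComplex C ℕ) :
    ∃ (A : ChainComplex C ℕ) (φ : A ⟶ E), (∀ n, 𝒜 (A.X n)) ∧ QuasiIso φ := by
  obtain ⟨A₀, f₀, hA₀, _⟩ := h (E.X 0)
  choose X' d' f' hX' d'_comp_d f'_comp_d lifts using fun n (s : ResolutionStage E n) =>
    h.exists_liftsUpToRefinement s.d s.f (E.d (n + 1) n)
  let stage : ∀ n, ResolutionStage E n :=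
    Nat.rec ⟨A₀, A₀, 0, f₀⟩ fun n s => ⟨X' n s, s.X, d' n s, f' n s⟩
  let dA (n : ℕ) : (stage (n + 1)).X ⟶ (stage n).X := d' n (stage n)
  let A : ChainComplex C ℕ := ChainComplex.of (fun n => (stage n).X) dA
    fun n => d'_comp_d (n + 1) (stage (n + 1))
  have A_d (n : ℕ) : A.d (n + 1) n = dA n := ChainComplex.of_d (fun n => (stage n).X) dA n
  let φ : A ⟶ E := ChainComplex.ofHom (fun n => (stage n).f) fun n => by
    rw [A_d]; exact f'_comp_d n (stage n)
  have comp_stage_d (n : ℕ) {T : C} (x : T ⟶ A.X n)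
      (hx : x ≫ A.d n ((ComplexShape.down ℕ).next n) = 0) : x ≫ (stage n).d = 0 := by
    cases n with
    | zero => exact comp_zero
    | succ n => rwa [ChainComplex.next_nat_succ, A_d] at hx
  have : Epi (φ.f 0) := ‹Epi f₀›
  refine ⟨A, φ, fun n => ?_, quasiIso_of_liftsUpToRefinement φ fun n T x y hx hxy => ?_⟩
  · cases n with
    | zero => exact hA₀
    | succ n => exact hX' n (stage n)
  · rw [A_d]
    exact lifts n (stage n) x y (comp_stage_d n x hx) hxy

end ChainComplex

section Extend

open HomologicalComplex

variable {ι ι' : Type*} {c : ComplexShape ι} {c' : ComplexShape ι'} (e : c.Embedding c')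
  {D : Type*} [Category* D] [HasZeroMorphisms D] [HasZeroObject D]

lemma prop_extend_X (P : ObjectProperty D) [P.IsClosedUnderIsomorphisms] [P.ContainsZero]
    {K : HomologicalComplex D c} (hK : ∀ i, P (K.X i)) (i' : ι') : P ((K.extend e).X i') := by
  by_cases hi' : ∃ i, e.f i = i'
  · obtain ⟨i, hi⟩ := hi'
    exact P.prop_of_iso (K.extendXIso e hi).symm (hK i)
  · exact P.prop_of_isZero (K.isZero_extend_X e i' (not_exists.mp hi'))

lemma nonempty_iso_extend_restriction [e.IsRelIff] (K : HomologicalComplex D c')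
    [K.IsStrictlySupported e] : Nonempty (K ≅ (K.restriction e).extend e) := by
  have hasLift : e.HasLift (𝟙 (K.restriction e)) := fun j hj i' hi' =>
    (K.isZero_X_of_isStrictlySupported e i' fun _ => hj.notMem hi' _).eq_of_src _ _
  let φ := e.liftExtend (𝟙 (K.restriction e)) hasLift
  have (i' : ι') : IsIso (φ.f i') := by
    by_cases hi' : ∃ i, e.f i = i'
    · obtain ⟨i, hi⟩ := hi'
      exact (e.isIso_liftExtend_f_iff _ hasLift hi).mpr (inferInstanceAs (IsIso (𝟙 _)))
    · have hi' := not_exists.mp hi'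
      exact isIso_of_source_target_iso_zero _ (K.isZero_X_of_isStrictlySupported e i' hi').isoZero
        ((K.restriction e).isZero_extend_X e i' hi').isoZero
  have : IsIso φ := Hom.isIso_of_components φ
  exact ⟨asIso φ⟩

end Extend

theorem exists_quasiIso_boundedAbove_of_PR2_general
    (𝒜 : ObjectProperty C) [𝒜.IsClosedUnderIsomorphisms] [𝒜.ContainsZero] (hPR2 : PR2 𝒜)
    (E : CochainComplex C ℤ) (b : ℤ) (hb : ∀ k : ℤ, b < k → IsZero (E.X k)) :
    ∃ (A : CochainComplex C ℤ) (f : A ⟶ E),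
      (∀ k : ℤ, b < k → IsZero (A.X k)) ∧ (∀ k : ℤ, 𝒜 (A.X k)) ∧ QuasiIso f := by
  let e := ComplexShape.embeddingUpIntLE b
  have : E.IsStrictlyLE b := (E.isStrictlyLE_iff b).mpr hb
  obtain ⟨i⟩ := nonempty_iso_extend_restriction e E
  obtain ⟨A, φ, hA, hφ⟩ := hPR2.exists_quasiIso_chainComplex (E.restriction e)
  have : QuasiIso (HomologicalComplex.extendMap φ e) :=
    (HomologicalComplex.quasiIso_extendMap_iff φ e).mpr hφ
  exact ⟨A.extend e, HomologicalComplex.extendMap φ e ≫ i.inv,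
    fun k hk => A.isZero_extend_X e k ((ComplexShape.notMem_range_embeddingUpIntLE_iff b k).mpr hk),
    prop_extend_X e 𝒜 hA, inferInstance⟩

/-- If `𝒜` satisfies (PR2), then every bounded-above cochain complex admits a
quasi-isomorphism from a bounded-above cochain complex with all terms in `𝒜`. -/
theorem exists_quasiIso_boundedAbove_of_PR2
    (𝒜 : C → Prop) (hadd : IsAdditiveClosed 𝒜) (hPR2 : PR2 𝒜)
    (E : CochainComplex C ℤ) (b : ℤ) (hb : ∀ k : ℤ, b < k → IsZero (E.X k)) :
    ∃ (A : CochainComplex C ℤ) (f : A ⟶ E),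
      (∀ k : ℤ, b < k → IsZero (A.X k)) ∧ (∀ k : ℤ, 𝒜 (A.X k)) ∧ QuasiIso f := by
  have : ObjectProperty.IsClosedUnderIsomorphisms 𝒜 := ⟨hadd.iso⟩
  have : ObjectProperty.ContainsZero 𝒜 := ⟨0, isZero_zero C, hadd.zero⟩
  exact exists_quasiIso_boundedAbove_of_PR2_general 𝒜 hPR2 E b hb
end

section
/- Let 𝒞 be an abelian category and let 𝒜 be a full additive subcategory satisfying (PR2) such that resdim_𝒜(E) < ∞ for every object E of 𝒞. Then for every bounded cochain complex E• there exist a bounded cochain complex A• with all terms in 𝒜 and a chain map f : A• → E• which is a quasi-isomorphism. -/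
/-!
Pull a complex `A` back along an epimorphism `B ↠ Aᵐ` in a single degree: replacing `Aᵐ` by `B` and
`Aᵐ⁻¹` by `Aᵐ⁻¹ ×_{Aᵐ} B` gives a quasi-isomorphic complex, because the projection to `A` is a base
change of an epimorphism between contractible two-term complexes.
Working downwards from the top degree of `E`, (PR2) moves every term but the lowest one into `𝒜`.
At the lowest degree `m` the fibre product is the kernel of `B ↠ Aᵐ`; taking `B` from a finite
resolution of `Aᵐ` replaces `Aᵐ` by its first syzygy in degree `m - 1`, so that after as many steps
as the resolution is long the lowest term vanishes.
-/

open CategoryTheory CategoryTheory.Limits ZeroObject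

universe v u

variable {C : Type u} [Category.{v} C] [Abelian C]

/-- `E` admits an exact sequence `0 → A⁻ⁿ → ⋯ → A⁰ → E → 0` with all `Aⁱ ∈ 𝒜`,
encoded as an everywhere-exact cochain complex with `E` placed in degree `1`. -/
def IsResolutionOfLength (𝒜 : C → Prop) (E : C) (n : ℕ) : Prop :=
  ∃ (R : CochainComplex C ℤ) (_ : R.X 1 ≅ E),
    (∀ k : ℤ, 1 < k → IsZero (R.X k)) ∧
    (∀ k : ℤ, k < -(n : ℤ) → IsZero (R.X k)) ∧
    (∀ k : ℤ, -(n : ℤ) ≤ k → k ≤ 0 → 𝒜 (R.X k)) ∧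
    (∀ k : ℤ, R.ExactAt k)

/-- The resolution dimension `resdim_𝒜 (E)`: the smallest `n` such that `E` admits an
`𝒜`-resolution of length `n`, and `∞` if no such `n` exists. -/
noncomputable def resdim (𝒜 : C → Prop) (E : C) : ℕ∞ :=
  sInf {m : ℕ∞ | ∃ n : ℕ, m = (n : ℕ∞) ∧ IsResolutionOfLength 𝒜 E n}

/-- `resdim_𝒜 (C)`: the supremum of `resdim_𝒜 (E)` over all objects `E`. -/
noncomputable def resdimCat (𝒜 : C → Prop) : ℕ∞ :=
  ⨆ E : C, resdim 𝒜 E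

section Double

open HomologicalComplex

variable {D : Type*} [Category* D] {ι : Type*} {c : ComplexShape ι} {i₀ i₁ : ι}

section

variable [HasZeroMorphisms D] [HasZeroObject D]

open scoped Classical in
/-- Constructor for morphisms to the two-term complex `double f hi`, dual to
`HomologicalComplex.mkHomFromDouble`. -/
noncomputable def mkHomToDouble {X₀ X₁ : D} {f : X₀ ⟶ X₁} (hi : c.Rel i₀ i₁) (h : i₀ ≠ i₁)
    {K : HomologicalComplex D c} (φ₀ : K.X i₀ ⟶ X₀) (φ₁ : K.X i₁ ⟶ X₁)
    (comm : φ₀ ≫ f = K.d i₀ i₁ ≫ φ₁) (hφ : ∀ k, c.Rel k i₀ → K.d k i₀ ≫ φ₀ = 0) :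
    K ⟶ double f hi where
  f k :=
    if hk₀ : k = i₀ then
      eqToHom (by rw [hk₀]) ≫ φ₀ ≫ (doubleXIso₀ f hi).inv ≫ eqToHom (by rw [hk₀])
    else if hk₁ : k = i₁ then
      eqToHom (by rw [hk₁]) ≫ φ₁ ≫ (doubleXIso₁ f hi h).inv ≫ eqToHom (by rw [hk₁])
    else 0
  comm' k₀ k₁ hk := by
    by_cases h₁ : k₁ = i₁
    · subst h₁
      obtain rfl := c.prev_eq hk hi
      simp [h.symm, double_d f hi h, reassoc_of% comm]
    · by_cases h₀ : k₁ = i₀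
      · subst h₀
        simp [reassoc_of% (hφ k₀ hk), double_d_eq_zero₁ f hi _ _ h]
      · exact (isZero_double_X f hi k₁ h₀ h₁).eq_of_tgt _ _

variable {X₀ X₁ : D} {f : X₀ ⟶ X₁} (hi : c.Rel i₀ i₁) (h : i₀ ≠ i₁)
  {K : HomologicalComplex D c} (φ₀ : K.X i₀ ⟶ X₀) (φ₁ : K.X i₁ ⟶ X₁)
  (comm : φ₀ ≫ f = K.d i₀ i₁ ≫ φ₁) (hφ : ∀ k, c.Rel k i₀ → K.d k i₀ ≫ φ₀ = 0)

@[simp]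
lemma mkHomToDouble_f₀ :
    (mkHomToDouble hi h φ₀ φ₁ comm hφ).f i₀ = φ₀ ≫ (doubleXIso₀ f hi).inv := by
  simp [mkHomToDouble]

@[simp]
lemma mkHomToDouble_f₁ :
    (mkHomToDouble hi h φ₀ φ₁ comm hφ).f i₁ = φ₁ ≫ (doubleXIso₁ f hi h).inv := by
  simp [mkHomToDouble, h.symm]

end

lemma acyclic_double_of_isIso [Preadditive D] [HasZeroObject D] [Balanced D] {X₀ X₁ : D}
    (f : X₀ ⟶ X₁) [IsIso f] (hi : c.Rel i₀ i₁) (h : i₀ ≠ i₁) : (double f hi).Acyclic := by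
  have hd : IsIso ((double f hi).d i₀ i₁) := by
    rw [double_d f hi h]
    infer_instance
  intro k
  by_cases h₀ : k = i₀
  · subst h₀
    rw [exactAt_iff' _ (c.prev k) k i₁ rfl (c.next_eq' hi),
      ShortComplex.exact_iff_mono _ (double_d_eq_zero₁ f hi _ _ h)]
    exact inferInstanceAs (Mono ((double f hi).d k i₁))
  by_cases h₁ : k = i₁
  · subst h₁
    rw [exactAt_iff' _ i₀ k (c.next k) (c.prev_eq' hi) rfl,
      ShortComplex.exact_iff_epi _ (double_d_eq_zero₀ f hi _ _ h.symm)]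
    exact inferInstanceAs (Epi ((double f hi).d i₀ k))
  · exact ShortComplex.exact_of_isZero_X₂ _ (isZero_double_X f hi k h₀ h₁)

end Double

section QuasiIso

open HomologicalComplex

variable {ι : Type*} {c : ComplexShape ι}

lemma quasiIso_of_acyclic {K L : HomologicalComplex C c} (φ : K ⟶ L)
    (hK : K.Acyclic) (hL : L.Acyclic) : QuasiIso φ :=
  ⟨fun i ↦ (quasiIsoAt_iff_exactAt φ i (hK i)).2 (hL i)⟩

lemma quasiIso_g_of_acyclic_X₁ {S : ShortComplex (HomologicalComplex C c)} (hS : S.ShortExact)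
    (h : S.X₁.Acyclic) : QuasiIso S.g := by
  have hH (i : ι) : IsZero (S.X₁.homology i) := (exactAt_iff_isZero_homology _ _).1 (h i)
  refine (quasiIso_iff _).2 fun i ↦ (quasiIsoAt_iff_isIso_homologyMap _ _).2 ?_
  have : Mono (homologyMap S.g i) := (hS.homology_exact₂ i).mono_g ((hH i).eq_of_src _ _)
  have : Epi (homologyMap S.g i) := by
    by_cases! hi : ∃ j, c.Rel i j
    · obtain ⟨j, hij⟩ := hi
      exact (hS.homology_exact₃ i j hij).epi_f ((hH j).eq_of_tgt _ _)
    · have := hS.epi_g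
      exact epi_homologyMap_of_epi_of_not_rel _ _ hi
  exact isIso_of_mono_of_epi _

lemma quasiIso_iff_acyclic_kernel {K L : HomologicalComplex C c} (φ : K ⟶ L) [Epi φ] :
    QuasiIso φ ↔ (kernel φ).Acyclic := by
  have hS : (ShortComplex.mk _ _ (kernel.condition φ)).ShortExact :=
    { exact := ShortComplex.exact_kernel φ }
  exact ⟨hS.acyclic_X₁, quasiIso_g_of_acyclic_X₁ hS⟩

lemma quasiIso_fst_of_isPullback {P K L M : HomologicalComplex C c} {fst : P ⟶ K} {snd : P ⟶ L}
    {f : K ⟶ M} {g : L ⟶ M} (sq : IsPullback fst snd f g) [Epi g] [QuasiIso g] :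
    QuasiIso fst := by
  have : Epi fst := by
    rw [← sq.isoPullback_hom_fst]
    infer_instance
  have := isIso_kernel_map_of_isPullback sq
  rw [quasiIso_iff_acyclic_kernel]
  exact fun i ↦ ((quasiIso_iff_acyclic_kernel g).1 inferInstance i).of_iso
    (asIso (kernel.map _ _ _ _ sq.w)).symm

end QuasiIso

section PullbackTerm

open HomologicalComplex

variable {ι : Type*} {c : ComplexShape ι} {i₀ i₁ : ι} (hi : c.Rel i₀ i₁) (h : i₀ ≠ i₁)

/-- The morphism of contractible two-term complexes `(X = X) ⟶ (Y = Y)` induced by `X ⟶ Y`. -/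
noncomputable def doubleIdMap {X Y : C} (f : X ⟶ Y) : double (𝟙 X) hi ⟶ double (𝟙 Y) hi :=
  mkHomToDouble hi h ((doubleXIso₀ _ hi).hom ≫ f) ((doubleXIso₁ _ hi h).hom ≫ f)
    (by simp [double_d _ hi h]) (fun k _ ↦ by simp [double_d_eq_zero₁ _ hi _ _ h])

lemma quasiIso_doubleIdMap {X Y : C} (f : X ⟶ Y) : QuasiIso (doubleIdMap hi h f) :=
  quasiIso_of_acyclic _ (acyclic_double_of_isIso _ hi h) (acyclic_double_of_isIso _ hi h)

lemma epi_doubleIdMap {X Y : C} (f : X ⟶ Y) [Epi f] : Epi (doubleIdMap hi h f) := by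
  refine epi_of_epi_f _ fun k ↦ ?_
  by_cases h₀ : k = i₀
  · subst h₀
    rw [doubleIdMap, mkHomToDouble_f₀]
    infer_instance
  by_cases h₁ : k = i₁
  · subst h₁
    rw [doubleIdMap, mkHomToDouble_f₁]
    infer_instance
  · exact ⟨fun _ _ _ ↦ (isZero_double_X _ hi k h₀ h₁).eq_of_src _ _⟩

variable (A : HomologicalComplex C c)

/-- The morphism from `A` to the two-term complex `Aⁱ¹ = Aⁱ¹` which is the identity in
degree `i₁`. -/
noncomputable def toDoubleId : A ⟶ double (𝟙 (A.X i₁)) hi :=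
  mkHomToDouble hi h (A.d i₀ i₁) (𝟙 _) (by simp) (by simp)

variable {A} {B : C} (p : B ⟶ A.X i₁)

/-- The pullback of the complex `A` along `p : B ⟶ Aⁱ¹`: the term `Aⁱ¹` is replaced by `B`, the
term `Aⁱ⁰` by `Aⁱ⁰ ×_{Aⁱ¹} B`, and the other terms are unchanged. It is encoded as a pullback of
complexes over the contractible complex `Aⁱ¹ = Aⁱ¹`. -/
noncomputable def pullbackTerm : HomologicalComplex C c :=
  pullback (toDoubleId hi h A) (doubleIdMap hi h p)

/-- The projection from the complex `A` pulled back along `p : B ⟶ Aⁱ¹` to `A`. -/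
noncomputable def pullbackTermπ : pullbackTerm hi h p ⟶ A :=
  pullback.fst _ _

instance quasiIso_pullbackTermπ [Epi p] : QuasiIso (pullbackTermπ hi h p) := by
  have := epi_doubleIdMap hi h p
  have := quasiIso_doubleIdMap hi h p
  exact quasiIso_fst_of_isPullback (IsPullback.of_hasPullback _ _)

lemma isPullback_pullbackTermπ_f (k : ι) :
    IsPullback ((pullbackTermπ hi h p).f k)
      ((pullback.snd (toDoubleId hi h A) (doubleIdMap hi h p)).f k)
      ((toDoubleId hi h A).f k) ((doubleIdMap hi h p).f k) :=
  (IsPullback.of_hasPullback (toDoubleId hi h A) (doubleIdMap hi h p)).map (eval C c k)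

lemma nonempty_pullbackTerm_X_iso {k : ι} (h₀ : k ≠ i₀) (h₁ : k ≠ i₁) :
    Nonempty ((pullbackTerm hi h p).X k ≅ A.X k) := by
  have : IsIso ((doubleIdMap hi h p).f k) :=
    isIso_of_source_target_iso_zero _ (isZero_double_X _ hi k h₀ h₁).isoZero
      (isZero_double_X _ hi k h₀ h₁).isoZero
  have := (isPullback_pullbackTermπ_f hi h p k).isIso_fst_of_isIso
  exact ⟨asIso ((pullbackTermπ hi h p).f k)⟩

lemma nonempty_pullbackTerm_X₁_iso : Nonempty ((pullbackTerm hi h p).X i₁ ≅ B) := by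
  have : IsIso ((toDoubleId hi h A).f i₁) := by
    rw [toDoubleId, mkHomToDouble_f₁]
    infer_instance
  have := (isPullback_pullbackTermπ_f hi h p i₁).isIso_snd_of_isIso
  exact ⟨asIso ((pullback.snd (toDoubleId hi h A) (doubleIdMap hi h p)).f i₁) ≪≫
    doubleXIso₁ _ hi h⟩

lemma exists_isPullback_pullbackTerm_X₀ :
    ∃ g : (pullbackTerm hi h p).X i₀ ⟶ B,
      IsPullback ((pullbackTermπ hi h p).f i₀) g (A.d i₀ i₁) p :=
  ⟨_, (isPullback_pullbackTermπ_f hi h p i₀).of_iso (Iso.refl _) (Iso.refl _)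
    (doubleXIso₀ _ hi) (doubleXIso₀ _ hi) (by simp)
    (Category.id_comp _).symm (by simp [toDoubleId])
    (by simp [doubleIdMap])⟩

lemma nonempty_iso_kernel_of_isPullback_of_isZero {D : Type*} [Category* D] [HasZeroMorphisms D]
    [HasKernels D] {P Z X Y : D} {fst : P ⟶ Z} {snd : P ⟶ X} {f : Z ⟶ Y} {g : X ⟶ Y}
    (sq : IsPullback fst snd f g) (hZ : IsZero Z) :
    Nonempty (P ≅ kernel g) := by
  have := isIso_kernel_map_of_isPullback sq
  exact ⟨(kernelZeroIsoSource (X := P) (Y := Z)).symm ≪≫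
    kernelIsoOfEq (hZ.eq_of_tgt 0 fst) ≪≫ asIso (kernel.map _ _ _ _ sq.w)⟩

lemma nonempty_pullbackTerm_X₀_iso_kernel (hA : IsZero (A.X i₀)) :
    Nonempty ((pullbackTerm hi h p).X i₀ ≅ kernel p) :=
  have ⟨_, sq⟩ := exists_isPullback_pullbackTerm_X₀ hi h p
  nonempty_iso_kernel_of_isPullback_of_isZero sq hA

end PullbackTerm

section FiniteResolution

variable {P : ObjectProperty C} {ι : Type*} {c : ComplexShape ι} {i j : ι}

/-- The objects `X` which admit a finite resolution by objects satisfying `P`: either `X` is zero,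
or there is an epimorphism `p : B ⟶ X` such that `B` satisfies `P` and `kernel p` admits a
finite resolution. -/
inductive HasFiniteResolution (P : ObjectProperty C) : ObjectProperty C
  | of_isZero {X : C} (hX : IsZero X) : HasFiniteResolution P X
  | of_epi {B X : C} (p : B ⟶ X) [Epi p] (hB : P B) (hp : HasFiniteResolution P (kernel p)) :
      HasFiniteResolution P X

instance : (HasFiniteResolution P).IsClosedUnderIsomorphisms where
  of_iso {X Y} e hX := by
    induction hX generalizing Y with
    | of_isZero hX => exact .of_isZero (hX.of_iso e.symm)
    | of_epi p hB _ ih => exact .of_epi (p ≫ e.hom) hB (ih (kernelCompMono p e.hom).symm)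

lemma PR2.of_hasFiniteResolution [P.ContainsZero] [P.IsClosedUnderIsomorphisms]
    (hP : ∀ X, HasFiniteResolution P X) : PR2 P := fun X ↦ by
  cases hP X with
  | of_isZero hX => exact ⟨X, 𝟙 X, P.prop_of_isZero hX, inferInstance⟩
  | of_epi p hB _ => exact ⟨_, p, hB, inferInstance⟩

lemma epi_toCycles_of_exactAt {D : Type*} [Category* D] [Preadditive D]
    {R : HomologicalComplex D c} [R.HasHomology j] (hij : c.Rel i j) (hR : R.ExactAt j) :
    Epi (R.toCycles i j) :=
  Preadditive.epi_of_isZero_cokernel' _ (R.homologyIsCokernel i j (c.prev_eq' hij))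
    hR.isZero_homology

lemma HasFiniteResolution.cycles_of_exactAt {R : HomologicalComplex C c} (hij : c.Rel i j)
    (hR : R.ExactAt j) (hP : P (R.X i)) (hi : HasFiniteResolution P (R.cycles i)) :
    HasFiniteResolution P (R.cycles j) := by
  have := epi_toCycles_of_exactAt hij hR
  have hker : IsLimit (KernelFork.ofι (R.iCycles i) _) :=
    isKernelOfComp (f := R.toCycles i j) (R.iCycles j) _ (R.cyclesIsKernel i j (c.next_eq' hij))
      (by simp [← cancel_mono (R.iCycles j)]) (by simp)
  exact .of_epi (R.toCycles i j) hP
    (ObjectProperty.prop_of_iso _ (hker.conePointUniqueUpToIso (limit.isLimit _)) hi)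

lemma IsResolutionOfLength.hasFiniteResolution {X : C} {n : ℕ} (hX : IsResolutionOfLength P X n) :
    HasFiniteResolution P X := by
  obtain ⟨R, e, hR_gt, hR_lt, hRP, hR⟩ := hX
  have hcycles (k : ℤ) (hk : -(n : ℤ) ≤ k) (hk₁ : k ≤ 1) :
      HasFiniteResolution P (R.cycles k) := by
    induction k, hk using Int.leInduction with
    | base =>
      have := epi_toCycles_of_exactAt (i := -(n : ℤ) - 1) (by simp) (hR (-(n : ℤ)))
      exact .of_isZero (.of_epi (R.toCycles (-(n : ℤ) - 1) _) (hR_lt _ (by lia)))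
    | succ k hk ih =>
      exact .cycles_of_exactAt rfl (hR _) (hRP k hk (by lia)) (ih (by lia))
  have : IsIso (R.iCycles 1) :=
    R.isIso_iCycles 1 2 (by simp) ((hR_gt 2 (by lia)).eq_of_tgt _ _)
  exact ObjectProperty.prop_of_iso _ (asIso (R.iCycles 1) ≪≫ e) (hcycles 1 (by lia) le_rfl)

lemma exists_isResolutionOfLength_of_resdim_lt_top {X : C} (hX : resdim P X < ⊤) :
    ∃ n, IsResolutionOfLength P X n :=
  have ⟨_, ⟨n, _, hn⟩, _⟩ := sInf_lt_iff.1 hX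
  ⟨n, hn⟩

end FiniteResolution

section CochainComplex

variable {A : CochainComplex C ℤ} {i₀ i₁ : ℤ} (hi : (ComplexShape.up ℤ).Rel i₀ i₁) (h : i₀ ≠ i₁)
  {B : C} (p : B ⟶ A.X i₁)

lemma isStrictlyGE_pullbackTerm {n : ℤ} (hn : n ≤ i₀) [A.IsStrictlyGE n] :
    CochainComplex.IsStrictlyGE (pullbackTerm hi h p) n := by
  have hi' : i₀ + 1 = i₁ := hi
  refine (CochainComplex.isStrictlyGE_iff _ _).2 fun k hk ↦ ?_
  exact (A.isZero_of_isStrictlyGE n k).of_iso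
    (nonempty_pullbackTerm_X_iso hi h p (by lia) (by lia)).some

lemma isStrictlyLE_pullbackTerm {n : ℤ} (hn : i₁ ≤ n) [A.IsStrictlyLE n] :
    CochainComplex.IsStrictlyLE (pullbackTerm hi h p) n := by
  have hi' : i₀ + 1 = i₁ := hi
  refine (CochainComplex.isStrictlyLE_iff _ _).2 fun k hk ↦ ?_
  exact (A.isZero_of_isStrictlyLE n k).of_iso
    (nonempty_pullbackTerm_X_iso hi h p (by lia) (by lia)).some

variable {P : ObjectProperty C} [P.IsClosedUnderIsomorphisms]

lemma prop_pullbackTerm_X (hB : P B) (hA : ∀ k, i₁ < k → P (A.X k)) (k : ℤ) (hk : i₀ < k) :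
    P ((pullbackTerm hi h p).X k) := by
  have hi' : i₀ + 1 = i₁ := hi
  by_cases hk₁ : k = i₁
  · subst hk₁
    exact P.prop_of_iso (nonempty_pullbackTerm_X₁_iso hi h p).some.symm hB
  · exact P.prop_of_iso (nonempty_pullbackTerm_X_iso hi h p (by lia) hk₁).some.symm
      (hA k (by lia))

variable [P.ContainsZero]

lemma exists_quasiIso_prop_X_of_PR2 (hP : PR2 P) (E : CochainComplex C ℤ) {a b m : ℤ}
    [E.IsStrictlyGE a] [E.IsStrictlyLE b] (hmb : m ≤ b) (ham : a ≤ m) :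
    ∃ (A : CochainComplex C ℤ) (f : A ⟶ E), QuasiIso f ∧ A.IsStrictlyGE a ∧ A.IsStrictlyLE b ∧
      ∀ k, m < k → P (A.X k) := by
  induction m, hmb using Int.leInductionDown with
  | base =>
    exact ⟨E, 𝟙 E, inferInstance, inferInstance, inferInstance,
      fun k _ ↦ P.prop_of_isZero (E.isZero_of_isStrictlyLE b k)⟩
  | pred m hmb ih =>
    obtain ⟨A, f, _, _, _, hA⟩ := ih (by lia)
    obtain ⟨B, p, hB, _⟩ := hP (A.X m)
    have hm : (ComplexShape.up ℤ).Rel (m - 1) m := by simp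
    have hm' : m - 1 ≠ m := by lia
    exact ⟨pullbackTerm hm hm' p, pullbackTermπ hm hm' p ≫ f, inferInstance,
      isStrictlyGE_pullbackTerm hm hm' p ham, isStrictlyLE_pullbackTerm hm hm' p hmb,
      prop_pullbackTerm_X hm hm' p hB hA⟩

lemma HasFiniteResolution.exists_quasiIso_prop_X {X : C} (hX : HasFiniteResolution P X)
    (A : CochainComplex C ℤ) {m b : ℤ} (hmb : m ≤ b) [A.IsStrictlyGE m] [A.IsStrictlyLE b]
    (e : A.X m ≅ X) (hA : ∀ k, m < k → P (A.X k)) :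
    ∃ (A' : CochainComplex C ℤ) (f : A' ⟶ A) (a' : ℤ), QuasiIso f ∧ A'.IsStrictlyGE a' ∧
      A'.IsStrictlyLE b ∧ ∀ k, P (A'.X k) := by
  induction hX generalizing A m with
  | of_isZero hX =>
    refine ⟨A, 𝟙 A, m, inferInstance, inferInstance, inferInstance, fun k ↦ ?_⟩
    rcases lt_trichotomy k m with hk | rfl | hk
    · exact P.prop_of_isZero (A.isZero_of_isStrictlyGE m k)
    · exact P.prop_of_isZero (hX.of_iso e)
    · exact hA k hk
  | of_epi p hB _ ih =>
    have hm : (ComplexShape.up ℤ).Rel (m - 1) m := by simp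
    have hm' : m - 1 ≠ m := by lia
    have := A.isStrictlyGE_of_ge (m - 1) m (by lia)
    have := isStrictlyGE_pullbackTerm hm hm' (p ≫ e.inv) le_rfl
    have := isStrictlyLE_pullbackTerm hm hm' (p ≫ e.inv) hmb
    have ⟨e'⟩ := nonempty_pullbackTerm_X₀_iso_kernel hm hm' (p ≫ e.inv)
      (A.isZero_of_isStrictlyGE m (m - 1))
    obtain ⟨A', f, a', _, hGE, hLE, hA'⟩ := ih (pullbackTerm hm hm' (p ≫ e.inv)) (by lia)
      (e' ≪≫ kernelCompMono p e.inv) (prop_pullbackTerm_X hm hm' _ hB hA)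
    exact ⟨A', f ≫ pullbackTermπ hm hm' _, a', inferInstance, hGE, hLE, hA'⟩

end CochainComplex

theorem exists_quasiIso_bounded_of_PR2_of_finite_resdim_general
    (P : ObjectProperty C) [P.IsClosedUnderIsomorphisms] [P.ContainsZero]
    (hres : ∀ E : C, resdim P E < ⊤) (E : CochainComplex C ℤ) (a b : ℤ)
    (hE : ∀ k : ℤ, (k < a ∨ b < k) → IsZero (E.X k)) :
    ∃ (A : CochainComplex C ℤ) (f : A ⟶ E) (a' b' : ℤ),
      (∀ k : ℤ, (k < a' ∨ b' < k) → IsZero (A.X k)) ∧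
      (∀ k : ℤ, P (A.X k)) ∧ QuasiIso f := by
  have hP (X : C) : HasFiniteResolution P X :=
    have ⟨_, hX⟩ := exists_isResolutionOfLength_of_resdim_lt_top (hres X)
    hX.hasFiniteResolution
  have : E.IsStrictlyGE (min a b) :=
    (E.isStrictlyGE_iff _).2 fun k hk ↦ hE k (.inl (by lia))
  have : E.IsStrictlyLE b := (E.isStrictlyLE_iff _).2 fun k hk ↦ hE k (.inr hk)
  have hab : min a b ≤ b := min_le_right a b
  obtain ⟨A, f, _, _, _, hA⟩ :=
    exists_quasiIso_prop_X_of_PR2 (.of_hasFiniteResolution hP) E hab le_rfl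
  obtain ⟨A', g, a', _, _, _, hA'⟩ := (hP _).exists_quasiIso_prop_X A hab (.refl _) hA
  refine ⟨A', g ≫ f, a', b, fun k hk ↦ ?_, hA', inferInstance⟩
  exact hk.elim (fun hk ↦ A'.isZero_of_isStrictlyGE a' k hk)
    (fun hk ↦ A'.isZero_of_isStrictlyLE b k hk)

/-- If `𝒜` satisfies (PR2) and every object of `C` has finite `𝒜`-resolution dimension,
then every bounded cochain complex admits a quasi-isomorphism from a bounded cochain
complex with all terms in `𝒜`. -/
theorem exists_quasiIso_bounded_of_PR2_of_finite_resdim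
    (𝒜 : C → Prop) (hadd : IsAdditiveClosed 𝒜) (hPR2 : PR2 𝒜)
    (hres : ∀ E : C, resdim 𝒜 E < ⊤)
    (E : CochainComplex C ℤ) (a b : ℤ)
    (hE : ∀ k : ℤ, (k < a ∨ b < k) → IsZero (E.X k)) :
    ∃ (A : CochainComplex C ℤ) (f : A ⟶ E) (a' b' : ℤ),
      (∀ k : ℤ, (k < a' ∨ b' < k) → IsZero (A.X k)) ∧
      (∀ k : ℤ, 𝒜 (A.X k)) ∧ QuasiIso f := by
  have : ObjectProperty.IsClosedUnderIsomorphisms 𝒜 := ⟨hadd.iso⟩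
  have : ObjectProperty.ContainsZero 𝒜 := ⟨0, isZero_zero C, hadd.zero⟩
  exact exists_quasiIso_bounded_of_PR2_of_finite_resdim_general 𝒜 hres E a b hE
end

section
/- Let 𝒞 be an abelian category and let 𝒜 be a preresolving full additive subcategory which is moreover extension-closed (for every short exact sequence 0 → X → Y → Z → 0 with X and Z in 𝒜, also Y lies in 𝒜) and satisfies resdim_𝒜(𝒞) = n finite. Then every acyclic (unbounded) cochain complex A• with all terms in 𝒜 has the image of each differential in 𝒜. -/
/-!
If `0 → X → Y → Z → 0` is exact with `Y ∈ 𝒜` and `Z` has resolution dimension at most `n + 1`,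
then `X` has resolution dimension at most `n`. To see this, choose `0 → K → B → Z → 0` with
`B ∈ 𝒜` and `K` of dimension at most `n`, and let `P = B ×_Z Y`, so that `0 → K → P → Y → 0` and
`0 → X → P → B → 0` are exact. If `P` has dimension at most `n`, then so does `X`, by pulling back
a resolution of `P`. For `n = 0` the object `P` is an extension of objects of `𝒜`. For `n > 0` take
an epimorphism `A ↠ P` with `A ∈ 𝒜` and kernel `M`; then `Q = A ×_P K` is the kernel of `A ↠ Y`,
hence in `𝒜`, and `0 → M → Q → K → 0` bounds the dimension of `M` by `n - 1`, by induction.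

In an acyclic complex with terms in `𝒜` each step to the left thus lowers the bound for the image
of the differential by one, and it starts at `n` arbitrarily far to the right.
-/

open CategoryTheory CategoryTheory.Limits ZeroObject

universe v u

variable {C : Type u} [Category.{v} C] [Abelian C]

/-- `𝒜` is extension-closed: for every short exact sequence `0 → X → Y → Z → 0`
with `X, Z ∈ 𝒜`, also `Y ∈ 𝒜`. -/
def ExtensionClosed (𝒜 : C → Prop) : Prop :=
  ∀ (S : ShortComplex C), S.ShortExact → 𝒜 S.X₁ → 𝒜 S.X₃ → 𝒜 S.X₂

lemma shortExact_of_isPullback {S : ShortComplex C} (hS : S.ShortExact) {P Y : C}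
    {fst : P ⟶ S.X₂} {snd : P ⟶ Y} {y : Y ⟶ S.X₃} (h : IsPullback fst snd S.g y) :
    (ShortComplex.mk (h.lift S.f 0 (by simp)) snd (h.lift_snd _ _ _)).ShortExact := by
  have := hS.mono_f
  have := hS.epi_g
  have hf : Mono (h.lift S.f 0 (by simp)) := mono_of_mono_fac (h.lift_fst S.f 0 (by simp))
  have hg : Epi snd := Abelian.epi_snd_of_isLimit _ _ h.isLimit
  refine .mk' (ShortComplex.exact_of_f_is_kernel _ ?_) hf hg
  refine KernelFork.IsLimit.ofι' _ _ fun {W} k hk ↦ ?_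
  have hkg : (k ≫ fst) ≫ S.g = 0 := by rw [Category.assoc, h.w, reassoc_of% hk, zero_comp]
  exact ⟨hS.exact.lift (k ≫ fst) hkg, h.hom_ext (by simp) (by simp [hk])⟩

lemma shortExact_comp_of_isPullback {S : ShortComplex C} (hS : S.ShortExact) {P Y : C}
    {fst : P ⟶ Y} {snd : P ⟶ S.X₁} {y : Y ⟶ S.X₂} [Epi y] (h : IsPullback fst snd y S.f) :
    (ShortComplex.mk fst (y ≫ S.g) (by rw [h.w_assoc, S.zero, comp_zero])).ShortExact := by
  have := hS.mono_f
  have := hS.epi_g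
  have hf : Mono fst := h.mono_fst_of_mono
  refine .mk' (ShortComplex.exact_of_f_is_kernel _ ?_) hf (epi_comp _ _)
  refine KernelFork.IsLimit.ofι' _ _ fun {W} k hk ↦ ?_
  have hkg : (k ≫ y) ≫ S.g = 0 := by rw [Category.assoc, hk]
  exact ⟨h.lift k (hS.exact.lift (k ≫ y) hkg) (by simp), h.lift_fst _ _ _⟩

lemma shortExact_image {S : ShortComplex C} (hS : S.Exact) :
    (ShortComplex.mk (image.ι S.f) (factorThruImage S.g)
      (image_ι_comp_eq_zero (comp_factorThruImage_eq_zero S.zero))).ShortExact :=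
  .mk' (ShortComplex.exact_of_f_is_kernel _
    (isKernelOfComp (image.ι S.g) S.g hS.isLimitImage' _ (image.fac S.g)))
    inferInstance inferInstance

lemma shortExact_image_d {K : CochainComplex C ℤ} {i j k : ℤ} (hij : i + 1 = j)
    (hjk : j + 1 = k) (hK : K.ExactAt j) :
    (ShortComplex.mk (image.ι (K.d i j)) (factorThruImage (K.d j k))
      (image_ι_comp_eq_zero (comp_factorThruImage_eq_zero (K.d_comp_d i j k)))).ShortExact :=
  shortExact_image ((K.exactAt_iff' i j k (by simp [← hij]) (by simp [← hjk])).1 hK)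

/-- `E` has an `𝒜`-resolution of length at most `n`, presented as iterated short exact sequences
`0 → K → B → E → 0` with `B ∈ 𝒜`. Objects of `𝒜` are admitted for every `n`, so that monotonicity
in `n` does not require `0 ∈ 𝒜`. -/
inductive HasResdimLE (𝒜 : C → Prop) : ℕ → C → Prop
  | of_mem {n : ℕ} {E : C} (hE : 𝒜 E) : HasResdimLE 𝒜 n E
  | of_shortExact {n : ℕ} {K B E : C} {f : K ⟶ B} {g : B ⟶ E} {w : f ≫ g = 0}
      (hS : (ShortComplex.mk f g w).ShortExact) (hB : 𝒜 B) (hK : HasResdimLE 𝒜 n K) :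
      HasResdimLE 𝒜 (n + 1) E

section Resolution

variable {𝒜 : C → Prop}

namespace HasResdimLE

lemma mem {E : C} : HasResdimLE 𝒜 0 E → 𝒜 E
  | of_mem hE => hE

lemma mono {m n : ℕ} (hmn : m ≤ n) {E : C} (h : HasResdimLE 𝒜 m E) : HasResdimLE 𝒜 n E := by
  induction h generalizing n with
  | of_mem hE => exact of_mem hE
  | of_shortExact hS hB _ ih =>
    obtain ⟨n, rfl⟩ := Nat.exists_eq_add_of_le' (Nat.one_le_of_lt hmn)
    exact of_shortExact hS hB (ih (Nat.le_of_succ_le_succ hmn))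

lemma of_iso [ObjectProperty.IsClosedUnderIsomorphisms 𝒜] {n : ℕ} {E F : C} (e : E ≅ F) :
    HasResdimLE 𝒜 n E → HasResdimLE 𝒜 n F
  | of_mem hE => of_mem (ObjectProperty.prop_of_iso 𝒜 e hE)
  | of_shortExact (f := f) (g := g) (w := w) hS hB hK =>
    have e' : ShortComplex.mk f g w ≅
        ShortComplex.mk f (g ≫ e.hom) (by rw [reassoc_of% w, zero_comp]) :=
      ShortComplex.isoMk (Iso.refl _) (Iso.refl _) e
    of_shortExact (ShortComplex.shortExact_of_iso e' hS) hB hK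

lemma X₁_of_mem_X₃ (hdef : DeflationClosed 𝒜) {S : ShortComplex C} (hS : S.ShortExact) {n : ℕ}
    (h₂ : HasResdimLE 𝒜 n S.X₂) (h₃ : 𝒜 S.X₃) : HasResdimLE 𝒜 n S.X₁ := by
  cases h₂ with
  | of_mem h => exact of_mem (hdef S hS h h₃)
  | @of_shortExact _ _ _ _ _ g _ hT hB hK =>
    have := hT.epi_g
    have sq := IsPullback.of_hasPullback g S.f
    have hpullback : 𝒜 (pullback g S.f) := hdef _ (shortExact_comp_of_isPullback hS sq) hB h₃
    exact of_shortExact (shortExact_of_isPullback hT sq) hpullback hK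

lemma X₁_of_mem_X₂ (hdef : DeflationClosed 𝒜) (hPR2 : PR2 𝒜) (hext : ExtensionClosed 𝒜)
    {S : ShortComplex C} (hS : S.ShortExact) {n : ℕ} (h₂ : 𝒜 S.X₂)
    (h₃ : HasResdimLE 𝒜 (n + 1) S.X₃) : HasResdimLE 𝒜 n S.X₁ := by
  have := hS.epi_g
  obtain h₃ | @⟨_, K, _, _, _, g, _, hT, hB, hK⟩ := h₃
  · exact of_mem (hdef S hS h₂ h₃)
  have sq := IsPullback.of_hasPullback g S.g
  suffices HasResdimLE 𝒜 n (pullback g S.g) from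
    X₁_of_mem_X₃ hdef (shortExact_of_isPullback hS sq.flip) this hB
  obtain ⟨ι, _, hP⟩ : ∃ (ι : K ⟶ pullback g S.g) (w : ι ≫ pullback.snd g S.g = 0),
      (ShortComplex.mk ι _ w).ShortExact := ⟨_, _, shortExact_of_isPullback hT sq⟩
  cases n with
  | zero => exact of_mem (hext _ hP hK.mem h₂)
  | succ n =>
    obtain ⟨A, a, hA, _⟩ := hPR2 (pullback g S.g)
    have hM : (ShortComplex.mk (kernel.ι a) a (kernel.condition a)).ShortExact :=
      { exact := ShortComplex.exact_kernel a }
    have sqA := IsPullback.of_hasPullback a ι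
    have hQ : 𝒜 (pullback a ι) := hdef _ (shortExact_comp_of_isPullback hP sqA) hA h₂
    exact of_shortExact hM hA
      (X₁_of_mem_X₂ hdef hPR2 hext (shortExact_of_isPullback hM sqA) hQ hK)

end HasResdimLE

lemma hasResdimLE_image_d [ObjectProperty.IsClosedUnderIsomorphisms 𝒜] {K : CochainComplex C ℤ}
    {i j k : ℤ} {n : ℕ} (hij : i + n = j) (hjk : j + 1 = k) (hzero : IsZero (K.X (i - 1)))
    (hexact : ∀ l, i ≤ l → l ≤ j → K.ExactAt l) (hmem : ∀ l, i ≤ l → l ≤ j → 𝒜 (K.X l)) :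
    HasResdimLE 𝒜 n (image (K.d j k)) := by
  induction n generalizing j k with
  | zero =>
    obtain rfl : i = j := by simpa using hij
    have hS := shortExact_image_d (sub_add_cancel i 1) hjk (hexact i le_rfl le_rfl)
    have := hS.isIso_g_iff.2 (hzero.of_epi (factorThruImage (K.d (i - 1) i)))
    exact .of_mem (ObjectProperty.prop_of_iso 𝒜 (asIso (factorThruImage (K.d i k)))
      (hmem i le_rfl le_rfl))
  | succ n ih =>
    have hS := shortExact_image_d (sub_add_cancel j 1) hjk (hexact j (by lia) le_rfl)
    refine .of_shortExact hS (hmem j (by lia) le_rfl) ?_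
    exact ih (by lia) (sub_add_cancel j 1) (fun l hl hl' ↦ hexact l hl (by lia))
      (fun l hl hl' ↦ hmem l hl (by lia))

lemma IsResolutionOfLength.hasResdimLE [ObjectProperty.IsClosedUnderIsomorphisms 𝒜] {n : ℕ}
    {E : C} (h : IsResolutionOfLength 𝒜 E n) : HasResdimLE 𝒜 n E := by
  obtain ⟨R, e, hpos, hneg, hmem, hexact⟩ := h
  have hS := shortExact_image_d (zero_add 1) one_add_one_eq_two (hexact 1)
  have := hS.isIso_f_iff.2 ((hpos 2 (by lia)).of_mono (image.ι (R.d 1 2)))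
  refine .of_iso (asIso (image.ι (R.d 0 1)) ≪≫ e) ?_
  exact hasResdimLE_image_d (neg_add_cancel (n : ℤ)) (zero_add 1) (hneg _ (by lia))
    (fun l _ _ ↦ hexact l) hmem

lemma hasResdimLE_of_resdim_le [ObjectProperty.IsClosedUnderIsomorphisms 𝒜] {n : ℕ} {E : C}
    (h : resdim 𝒜 E ≤ n) : HasResdimLE 𝒜 n E := by
  have hlt : resdim 𝒜 E < (n + 1 : ℕ) := h.trans_lt (by exact_mod_cast n.lt_succ_self)
  obtain ⟨_, ⟨m, rfl, hm⟩, hmn⟩ := sInf_lt_iff.1 hlt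
  exact hm.hasResdimLE.mono (Nat.lt_succ_iff.1 (by exact_mod_cast hmn))

theorem image_mem_of_acyclic_of_extensionClosed_general (hdef : DeflationClosed 𝒜)
    (hPR2 : PR2 𝒜) (hext : ExtensionClosed 𝒜) {A : CochainComplex C ℤ} {i j k : ℤ} {n : ℕ}
    (hij : i + n = j) (hjk : j + 1 = k) (hterms : ∀ l, i < l → l ≤ j → 𝒜 (A.X l))
    (hacy : ∀ l, i < l → l ≤ j → A.ExactAt l) (hres : HasResdimLE 𝒜 n (image (A.d j k))) :
    𝒜 (image (A.d i (i + 1))) := by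
  induction n generalizing j k with
  | zero =>
    obtain rfl : i = j := by simpa using hij
    exact hjk ▸ hres.mem
  | succ n ih =>
    have hS := shortExact_image_d (sub_add_cancel j 1) hjk (hacy j (by lia) le_rfl)
    exact ih (by lia) (sub_add_cancel j 1) (fun l hl hl' ↦ hterms l hl (by lia))
      (fun l hl hl' ↦ hacy l hl (by lia))
      (hres.X₁_of_mem_X₂ hdef hPR2 hext hS (hterms j (by lia) le_rfl))

end Resolution

/-- If `𝒜` is preresolving, extension-closed and `resdim_𝒜 (C) = n` is finite, then every
acyclic unbounded cochain complex with terms in `𝒜` has all images of differentials in `𝒜`. -/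
theorem image_mem_of_acyclic_of_extensionClosed
    (𝒜 : C → Prop) (hadd : IsAdditiveClosed 𝒜)
    (hdef : DeflationClosed 𝒜) (hPR2 : PR2 𝒜) (hext : ExtensionClosed 𝒜)
    (n : ℕ) (hres : resdimCat 𝒜 = (n : ℕ∞))
    (A : CochainComplex C ℤ) (hterms : ∀ k : ℤ, 𝒜 (A.X k))
    (hacy : ∀ k : ℤ, A.ExactAt k) (i : ℤ) :
    𝒜 (image (A.d i (i + 1))) := by
  have : ObjectProperty.IsClosedUnderIsomorphisms 𝒜 := ⟨fun e ↦ hadd.iso e⟩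
  exact image_mem_of_acyclic_of_extensionClosed_general hdef hPR2 hext rfl rfl
    (fun l _ _ ↦ hterms l) (fun l _ _ ↦ hacy l)
    (hasResdimLE_of_resdim_le ((le_iSup (resdim 𝒜) _).trans hres.le))
end

section
/- Let 𝒞 be an abelian category and let 𝒜 be a preresolving full additive subcategory with resdim_𝒜(𝒞) = n finite. Then for every acyclic (unbounded) cochain complex E• with all terms in 𝒜, there exists a contractible (null-homotopic) cochain complex C• with all terms in 𝒜 such that the image of every differential of the direct sum complex C• ⊕ E• lies in 𝒜. In particular, E• is homotopy equivalent to an acyclic complex with terms in 𝒜 all of whose images of differentials lie in 𝒜. -/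
open CategoryTheory CategoryTheory.Limits ZeroObject

universe v u

variable {C : Type u} [Category.{v} C] [Abelian C]

/-!
The complex `E` already has all its images in `𝒜`, so that `K = 0` works.

Write `Zᵏ` for the cycles of `E`, and suppose that `Zᵏ` is the kernel of an epimorphism `P ⟶ X`
with `P ∈ 𝒜`, where `X` has an `𝒜`-resolution of length `r + 1` starting with `B ⟶ X`. Choose an
epimorphism `Q ⟶ P ×_X B` with `Q ∈ 𝒜` and put `X' := ker (Q ⟶ X)`. Being the pullback of
`ker (B ⟶ X)` along `Q ⟶ B`, the object `X'` has an `𝒜`-resolution of length `r`. It is also the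
pullback of `Zᵏ` along `Q ⟶ P`, so `Q ×_P Eᵏ⁻¹ ⟶ X'` is an epimorphism with kernel `Zᵏ⁻¹`, and
`Q ×_P Eᵏ⁻¹ ∈ 𝒜` as the kernel of `Q ⊞ Eᵏ⁻¹ ⟶ P`. Thus every step to the left shortens the
resolution by one. Starting from `Eᵐ ⟶ Zᵐ⁺¹`, one reaches an `X ∈ 𝒜`, and then the kernel of
`P ⟶ X` lies in `𝒜`.
-/

section Kernels

variable {D : Type*} [Category D] [HasZeroMorphisms D] [HasKernels D]

lemma isPullback_kernel_comp {Q P X : D} (u : Q ⟶ P) (p : P ⟶ X) :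
    IsPullback (kernel.ι (u ≫ p)) (kernel.lift p (kernel.ι (u ≫ p) ≫ u) (by simp))
      u (kernel.ι p) :=
  IsPullback.of_isLimit' ⟨by simp⟩ <|
    PullbackCone.IsLimit.mk _
      (fun s => kernel.lift (u ≫ p) s.fst (by simp [s.condition_assoc]))
      (fun s => by simp)
      (fun s => by simp [← cancel_mono (kernel.ι p), s.condition])
      (fun s m hfst _ => by simp [← cancel_mono (kernel.ι (u ≫ p)), hfst])

/-- The canonical isomorphism between the kernels of opposite sides of a pullback square. -/
noncomputable def kernelIsoOfIsPullback {Y Q W P : D} {f : Y ⟶ Q} {s : Y ⟶ W} {u : Q ⟶ P}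
    {t : W ⟶ P} (h : IsPullback f s u t) : kernel f ≅ kernel t :=
  have := isIso_kernel_map_of_isPullback h
  asIso (kernel.map f t s u h.w)

end Kernels

section Cycles

variable {ι : Type*} {c : ComplexShape ι} (E : HomologicalComplex C c) {i j : ι}

lemma epi_toCycles_of_exactAt_s9 (hij : c.Rel i j) (hE : E.ExactAt j) : Epi (E.toCycles i j) :=
  Preadditive.epi_of_isZero_cokernel' _ (E.homologyIsCokernel i j (c.prev_eq' hij))
    hE.isZero_homology

/-- The cycles in degree `i` as the kernel of the corestriction of the differential to cycles. -/
noncomputable def cyclesIsoKernelToCycles (hij : c.Rel i j) :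
    E.cycles i ≅ kernel (E.toCycles i j) :=
  (E.cyclesIsKernel i j (c.next_eq' hij)).conePointUniqueUpToIso (kernelIsKernel (E.d i j)) ≪≫
    kernelIsoOfEq (E.toCycles_i i j).symm ≪≫ kernelCompMono (E.toCycles i j) (E.iCycles j)

lemma isIso_toCycles_of_isZero_cycles (hij : c.Rel i j) (hE : E.ExactAt j)
    (hi : IsZero (E.cycles i)) : IsIso (E.toCycles i j) :=
  have := epi_toCycles_of_exactAt_s9 E hij hE
  have : Mono (E.toCycles i j) :=
    Preadditive.mono_of_isZero_kernel _ (hi.of_iso (cyclesIsoKernelToCycles E hij).symm)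
  isIso_of_mono_of_epi _

/-- At an exact spot, the cycles are the image of the incoming differential. -/
noncomputable def cyclesIsoImageOfExactAt (hij : c.Rel i j) (hE : E.ExactAt j) :
    E.cycles j ≅ image (E.d i j) :=
  have := epi_toCycles_of_exactAt_s9 E hij hE
  have := strongEpi_of_epi (E.toCycles i j)
  image.isoStrongEpiMono (E.toCycles i j) (E.iCycles j) (E.toCycles_i i j)

end Cycles

section Preresolving

variable {𝒜 : C → Prop}

lemma DeflationClosed.kernel_mem (hdef : DeflationClosed 𝒜) {P X : C} (p : P ⟶ X) [Epi p]
    (hP : 𝒜 P) (hX : 𝒜 X) : 𝒜 (kernel p) :=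
  hdef (.mk (kernel.ι p) p (kernel.condition p)) ⟨ShortComplex.exact_kernel p⟩ hP hX

lemma DeflationClosed.pullback_mem (hdef : DeflationClosed 𝒜) (hadd : IsAdditiveClosed 𝒜)
    {Y Q W P : C} {f : Y ⟶ Q} {s : Y ⟶ W} {u : Q ⟶ P} {t : W ⟶ P} (h : IsPullback f s u t)
    [Epi u] (hQ : 𝒜 Q) (hW : 𝒜 W) (hP : 𝒜 P) : 𝒜 Y := by
  have : Epi (biprod.desc u (-t)) := epi_of_epi_fac (biprod.inl_desc u (-t))
  exact hdef h.shortComplex'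
    { exact := h.exact_shortComplex'
      mono_f := h.mono_shortComplex'_f
      epi_g := this } (hadd.biprod hQ hW) hP

/-- `X` has an `𝒜`-resolution of length `r`, built by taking the kernel of an epimorphism from an
object of `𝒜` repeatedly. Compared with `IsResolutionOfLength`, this form allows induction on the
length. -/
def IsResolvable (𝒜 : C → Prop) : ℕ → C → Prop
  | 0, X => 𝒜 X
  | r + 1, X => ∃ (B : C) (b : B ⟶ X), Epi b ∧ 𝒜 B ∧ IsResolvable 𝒜 r (kernel b)

namespace IsResolvable

lemma of_iso (hadd : IsAdditiveClosed 𝒜) {r : ℕ} {X Y : C} (hX : IsResolvable 𝒜 r X)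
    (e : X ≅ Y) : IsResolvable 𝒜 r Y := by
  induction r generalizing X Y with
  | zero => exact hadd.iso e hX
  | succ r ih =>
    obtain ⟨B, b, _, hB, hker⟩ := hX
    exact ⟨B, b ≫ e.hom, inferInstance, hB, ih hker (kernelCompMono b e.hom).symm⟩

lemma succ (hadd : IsAdditiveClosed 𝒜) {r : ℕ} {X : C} (hX : IsResolvable 𝒜 r X) :
    IsResolvable 𝒜 (r + 1) X := by
  induction r generalizing X with
  | zero => exact ⟨X, 𝟙 X, inferInstance, hX, hadd.iso (kernel.ofMono (𝟙 X)).symm hadd.zero⟩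
  | succ r ih =>
    obtain ⟨B, b, hb, hB, hker⟩ := hX
    exact ⟨B, b, hb, hB, ih hker⟩

lemma mono (hadd : IsAdditiveClosed 𝒜) {r s : ℕ} (hrs : r ≤ s) {X : C}
    (hX : IsResolvable 𝒜 r X) : IsResolvable 𝒜 s X :=
  Nat.le_induction hX (fun _ _ => succ hadd) s hrs

lemma of_isPullback (hadd : IsAdditiveClosed 𝒜) (hdef : DeflationClosed 𝒜) {r : ℕ}
    {Y Q W P : C} {f : Y ⟶ Q} {s : Y ⟶ W} {u : Q ⟶ P} {t : W ⟶ P} (h : IsPullback f s u t)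
    [Epi u] (hQ : 𝒜 Q) (hP : 𝒜 P) (hW : IsResolvable 𝒜 r W) : IsResolvable 𝒜 r Y := by
  cases r with
  | zero => exact hdef.pullback_mem hadd h hQ hW hP
  | succ r =>
    obtain ⟨B, b, _, hB, hker⟩ := hW
    have hB' := IsPullback.of_hasPullback s b
    exact ⟨pullback s b, pullback.fst s b, inferInstance,
      hdef.pullback_mem hadd (hB'.flip.paste_vert h.flip).flip hQ hB hP,
      hker.of_iso hadd (kernelIsoOfIsPullback hB').symm⟩

lemma cycles_succ (hadd : IsAdditiveClosed 𝒜) {ι : Type*} {c : ComplexShape ι}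
    {E : HomologicalComplex C c} {i j : ι} (hij : c.Rel i j) (hE : E.ExactAt j)
    (hterm : 𝒜 (E.X i)) {r : ℕ} (hi : IsResolvable 𝒜 r (E.cycles i)) :
    IsResolvable 𝒜 (r + 1) (E.cycles j) :=
  ⟨E.X i, E.toCycles i j, epi_toCycles_of_exactAt_s9 E hij hE, hterm,
    hi.of_iso hadd (cyclesIsoKernelToCycles E hij)⟩

lemma of_isResolutionOfLength (hadd : IsAdditiveClosed 𝒜) {X : C} {n : ℕ}
    (hX : IsResolutionOfLength 𝒜 X n) : IsResolvable 𝒜 n X := by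
  obtain ⟨R, e, hright, hleft, hterms, hexact⟩ := hX
  have hcycles (r : ℕ) (hr : r ≤ n) : IsResolvable 𝒜 r (R.cycles (-n + r + 1)) := by
    induction r with
    | zero =>
      have := epi_toCycles_of_exactAt_s9 R (sub_add_cancel (-n : ℤ) 1) (hexact _)
      have hbot : IsZero (R.cycles (-n)) :=
        (hleft _ (by omega)).of_epi (R.toCycles (-n - 1) (-n))
      rw [Nat.cast_zero, add_zero]
      have := isIso_toCycles_of_isZero_cycles R (rfl : (-n : ℤ) + 1 = -n + 1) (hexact _) hbot
      exact hadd.iso (asIso (R.toCycles (-n) (-n + 1))) (hterms _ le_rfl (by omega))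
    | succ r ih =>
      have hrel : (-n + r + 1 : ℤ) + 1 = -n + (r + 1 : ℕ) + 1 := by push_cast; ring
      exact cycles_succ hadd hrel (hexact _)
        (hterms _ (by omega) (by omega)) (ih (by omega))
  have : IsIso (R.iCycles 1) :=
    R.isIso_iCycles 1 2 (by simp) ((hright 2 (by norm_num)).eq_of_tgt _ _)
  have hone := hcycles n le_rfl
  rw [neg_add_cancel, zero_add] at hone
  exact hone.of_iso hadd (asIso (R.iCycles 1) ≪≫ e)

lemma of_resdim_le (hadd : IsAdditiveClosed 𝒜) {X : C} {n : ℕ} (hX : resdim 𝒜 X ≤ n) :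
    IsResolvable 𝒜 n X := by
  obtain ⟨_, ⟨m, rfl, hm⟩, hmn⟩ := sInf_lt_iff.1 (ENat.lt_natCast_add_one_iff.2 hX)
  exact (of_isResolutionOfLength hadd hm).mono hadd
    (ENat.natCast_le_natCast.1 (ENat.lt_natCast_add_one_iff.1 hmn))

end IsResolvable

/-- `Z` is a first syzygy of an object `X` with an `𝒜`-resolution of length `r`: it is isomorphic
to the kernel of an epimorphism onto `X` from an object of `𝒜`, which need not belong to the
resolution. -/
def IsSyzygy (𝒜 : C → Prop) (r : ℕ) (Z : C) : Prop :=
  ∃ (P X : C) (p : P ⟶ X),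
    Epi p ∧ 𝒜 P ∧ IsResolvable 𝒜 r X ∧ Nonempty (Z ≅ kernel p)

namespace IsSyzygy

lemma of_iso {r : ℕ} {Z Z' : C} (hZ : IsSyzygy 𝒜 r Z) (e : Z ≅ Z') : IsSyzygy 𝒜 r Z' := by
  obtain ⟨P, X, p, hp, hP, hX, ⟨e'⟩⟩ := hZ
  exact ⟨P, X, p, hp, hP, hX, ⟨e.symm ≪≫ e'⟩⟩

lemma mem (hadd : IsAdditiveClosed 𝒜) (hdef : DeflationClosed 𝒜) {Z : C}
    (hZ : IsSyzygy 𝒜 0 Z) : 𝒜 Z := by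
  obtain ⟨P, X, p, _, hP, hX, ⟨e⟩⟩ := hZ
  exact hadd.iso e.symm (hdef.kernel_mem p hP hX)

lemma kernel_of_epi (hadd : IsAdditiveClosed 𝒜) (hdef : DeflationClosed 𝒜) (hPR2 : PR2 𝒜) {r : ℕ}
    {A Z : C} (q : A ⟶ Z) [Epi q] (hA : 𝒜 A) (hZ : IsSyzygy 𝒜 (r + 1) Z) :
    IsSyzygy 𝒜 r (kernel q) := by
  obtain ⟨P, X, p, _, hP, ⟨B, b, _, hB, hker⟩, ⟨e⟩⟩ := hZ
  obtain ⟨Q, g, hQ, _⟩ := hPR2 (pullback p b)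
  let u : Q ⟶ P := g ≫ pullback.fst p b
  let v : Q ⟶ B := g ≫ pullback.snd p b
  have huv : v ≫ b = u ≫ p := by simp [u, v, pullback.condition]
  have hX' : IsResolvable 𝒜 r (kernel (u ≫ p)) :=
    huv ▸ .of_isPullback hadd hdef (isPullback_kernel_comp v b) hQ hB hker
  have hsq := IsPullback.of_hasPullback
    (kernel.lift p (kernel.ι (u ≫ p) ≫ u) (by simp)) (q ≫ e.hom)
  refine ⟨_, _, pullback.fst _ _, inferInstance, ?_, hX',
    ⟨(kernelCompMono q e.hom).symm ≪≫ (kernelIsoOfIsPullback hsq).symm⟩⟩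
  exact hdef.pullback_mem hadd (hsq.flip.paste_vert (isPullback_kernel_comp u p).flip).flip
    hQ hA hP

lemma cycles_of_isResolvable {ι : Type*} {c : ComplexShape ι} {E : HomologicalComplex C c}
    {i j : ι} (hij : c.Rel i j) (hE : E.ExactAt j) (hterm : 𝒜 (E.X i)) {r : ℕ}
    (hj : IsResolvable 𝒜 r (E.cycles j)) :
    IsSyzygy 𝒜 r (E.cycles i) :=
  ⟨E.X i, E.cycles j, E.toCycles i j, epi_toCycles_of_exactAt_s9 E hij hE, hterm, hj,
    ⟨cyclesIsoKernelToCycles E hij⟩⟩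

lemma cycles_mem (hadd : IsAdditiveClosed 𝒜) (hdef : DeflationClosed 𝒜) (hPR2 : PR2 𝒜)
    {E : CochainComplex C ℤ} (hterms : ∀ k, 𝒜 (E.X k)) (hacy : ∀ k, E.ExactAt k) {r : ℕ} {k : ℤ}
    (h : IsSyzygy 𝒜 r (E.cycles (k + r))) : 𝒜 (E.cycles k) := by
  induction r with
  | zero => exact mem hadd hdef (by simpa using h)
  | succ r ih =>
    have hij : k + r + 1 = k + (r + 1 : ℕ) := by push_cast; ring
    have := epi_toCycles_of_exactAt_s9 E hij (hacy (k + (r + 1 : ℕ)))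
    have hker := h.kernel_of_epi hadd hdef hPR2 (E.toCycles (k + r) _) (hterms _)
    exact ih (hker.of_iso (cyclesIsoKernelToCycles E hij).symm)

end IsSyzygy

theorem exists_contractible_summand_of_acyclic_general (hadd : IsAdditiveClosed 𝒜)
    (hdef : DeflationClosed 𝒜) (hPR2 : PR2 𝒜) {E : CochainComplex C ℤ} (hterms : ∀ k, 𝒜 (E.X k))
    (hacy : ∀ k, E.ExactAt k) (hres : ∀ k : ℤ, ∃ n : ℕ, resdim 𝒜 (E.cycles (k + n)) ≤ n) (k : ℤ) :
    𝒜 (image (E.d k (k + 1))) := by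
  obtain ⟨n, hn⟩ := hres (k + 1 + 1)
  have hrel : k + 1 + n + 1 = k + 1 + 1 + n := by ring
  have hsyz : IsSyzygy 𝒜 n (E.cycles (k + 1 + n)) :=
    .cycles_of_isResolvable hrel (hacy _) (hterms _) (.of_resdim_le hadd hn)
  exact hadd.iso (cyclesIsoImageOfExactAt E rfl (hacy _))
    (hsyz.cycles_mem hadd hdef hPR2 hterms hacy)

lemma exists_contractible_summand_of_image_d_mem (hadd : IsAdditiveClosed 𝒜)
    {E : CochainComplex C ℤ} (himage : ∀ k : ℤ, 𝒜 (image (E.d k (k + 1)))) :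
    ∃ K : CochainComplex C ℤ, (∀ k : ℤ, 𝒜 (K.X k)) ∧ Nonempty (Homotopy (𝟙 K) 0) ∧
      ∀ k : ℤ, 𝒜 (image ((K ⊞ E).d k (k + 1))) := by
  let e : E ≅ (0 : CochainComplex C ℤ) ⊞ E := isoZeroBiprod (isZero_zero _)
  have hzero (k : ℤ) : IsZero ((0 : CochainComplex C ℤ).X k) :=
    (HomologicalComplex.eval C _ k).map_isZero (isZero_zero _)
  have imageIso (k : ℤ) :
      image (E.d k (k + 1)) ≅ image (((0 : CochainComplex C ℤ) ⊞ E).d k (k + 1)) :=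
    im.mapIso <| Arrow.isoMk' _ _ (HomologicalComplex.Hom.isoApp e k)
      (HomologicalComplex.Hom.isoApp e (k + 1))
  exact ⟨0, fun k => hadd.iso (hzero k).isoZero.symm hadd.zero,
    ⟨.ofEq ((isZero_zero _).eq_of_src _ _)⟩, fun k => hadd.iso (imageIso k) (himage k)⟩

end Preresolving

/-- If `𝒜` is preresolving with `resdim_𝒜 (C) = n` finite and `E•` is an acyclic unbounded
cochain complex with all terms in `𝒜`, then there is a contractible cochain complex `C•`
with all terms in `𝒜` such that all images of differentials of `C• ⊞ E•` lie in `𝒜`.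
In particular, `E•` is homotopy equivalent to an acyclic complex with terms in `𝒜` all of
whose images of differentials lie in `𝒜`. -/
theorem exists_contractible_summand_of_acyclic
    (𝒜 : C → Prop) (hadd : IsAdditiveClosed 𝒜)
    (hdef : DeflationClosed 𝒜) (hPR2 : PR2 𝒜)
    (n : ℕ) (hres : resdimCat 𝒜 = (n : ℕ∞))
    (E : CochainComplex C ℤ) (hterms : ∀ k : ℤ, 𝒜 (E.X k))
    (hacy : ∀ k : ℤ, E.ExactAt k) :
    (∃ K : CochainComplex C ℤ,
        (∀ k : ℤ, 𝒜 (K.X k)) ∧ Nonempty (Homotopy (𝟙 K) 0) ∧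
        (∀ k : ℤ, 𝒜 (image ((K ⊞ E).d k (k + 1))))) ∧
      (∃ A : CochainComplex C ℤ,
        (∀ k : ℤ, 𝒜 (A.X k)) ∧ (∀ k : ℤ, A.ExactAt k) ∧
        (∀ k : ℤ, 𝒜 (image (A.d k (k + 1)))) ∧ Nonempty (HomotopyEquiv E A)) := by
  have himage : ∀ k : ℤ, 𝒜 (image (E.d k (k + 1))) :=
    exists_contractible_summand_of_acyclic_general hadd hdef hPR2 hterms hacy
      fun k => ⟨n, hres ▸ le_iSup (resdim 𝒜) (E.cycles (k + n))⟩
  exact ⟨exists_contractible_summand_of_image_d_mem hadd himage,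
    E, hterms, hacy, himage, ⟨.refl E⟩⟩
end

section
/- Let 𝒞 be an abelian category and let 𝒜 be a preresolving full additive subcategory with resdim_𝒜(𝒞) = n finite. Then for every acyclic cochain complex E• with all terms in 𝒜 and every integer l, there exists an object B in 𝒜 such that im(d_E^l) ⊕ B lies in 𝒜; in particular resdim_𝒜(im(d_E^l)) ≤ 1. -/
open CategoryTheory CategoryTheory.Limits ZeroObject

universe v u

variable {C : Type u} [Category.{v} C] [Abelian C]

/-!
Let `Y` have an `𝒜`-resolution of length `n`, and compare it with a longer exact sequence
`0 ⟶ Y' ⟶ Aₘ₋₁ ⟶ ⋯ ⟶ A₀ ⟶ Y ⟶ 0` with terms in `𝒜`. A third sequence `P` mapping to both can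
be built by covering fibre products with objects of `𝒜`. The mapping cones of the two comparison
maps are exact with terms in `𝒜`, so deflation-closedness puts all their cycles in `𝒜`. In degrees
beyond `n` the first cone is a shift of `P`, so the syzygies of `P` lie in `𝒜`; the second cone is
an extension of a shift of `P` by the given sequence, so `Y'` lies in `𝒜`. The cycles of the cone
of a comparison map `f` are the fibre products of its components with covers of the target by
objects of `𝒜`, so the whole argument is an induction on short exact sequences.

In an acyclic complex over `𝒜`, every image is such a `Y'`, for a `Y` arbitrarily far to the right.
-/

section Homology

variable {ι : Type*} {c : ComplexShape ι}

theorem epi_toCycles_of_exactAt_s10 {K : HomologicalComplex C c} {i j : ι} (hij : c.Rel i j)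
    (h : K.ExactAt j) : Epi (K.toCycles i j) := by
  obtain rfl := c.prev_eq' hij
  exact ShortComplex.Exact.epi_toCycles h

/-- The sequence `Zⁱ ⟶ Kⁱ ⟶ Zʲ` of a complex `K`, where `Z` denotes the cycles. -/
noncomputable abbrev cyclesShortComplex (K : HomologicalComplex C c) (i j : ι) : ShortComplex C :=
  .mk (K.iCycles i) (K.toCycles i j) (by simp [← cancel_mono (K.iCycles j)])

theorem cyclesShortComplex_shortExact {K : HomologicalComplex C c} {i j : ι} (hij : c.Rel i j)
    (h : K.ExactAt j) : (cyclesShortComplex K i j).ShortExact where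
  exact := ShortComplex.exact_of_f_is_kernel _ <|
    isKernelOfComp (K.iCycles j) (K.d i j) (K.cyclesIsKernel i j (c.next_eq' hij)) _
      (K.toCycles_i i j)
  epi_g := epi_toCycles_of_exactAt_s10 hij h

/-- At an exact spot, the cycles are the image of the incoming differential. -/
noncomputable def cyclesIsoImage {K : HomologicalComplex C c} {i j : ι} (hij : c.Rel i j)
    (h : K.ExactAt j) : K.cycles j ≅ image (K.d i j) :=
  have := epi_toCycles_of_exactAt_s10 hij h
  have := strongEpi_of_epi (K.toCycles i j)
  image.isoStrongEpiMono (K.toCycles i j) (K.iCycles j) (K.toCycles_i i j)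

theorem acyclic_double_of_isIso_s10 {X Y : C} (f : X ⟶ Y) [IsIso f] {i j : ι} (hij : c.Rel i j)
    (hne : i ≠ j) : (HomologicalComplex.double f hij).Acyclic := by
  have : IsIso ((HomologicalComplex.double f hij).d i j) := by
    rw [HomologicalComplex.double_d f hij hne]
    infer_instance
  intro k
  by_cases hi : k = i
  · subst hi
    rw [HomologicalComplex.exactAt_iff' _ _ k j rfl (c.next_eq' hij),
      ShortComplex.exact_iff_mono _ (HomologicalComplex.double_d_eq_zero₁ f hij _ _ hne)]
    exact inferInstanceAs (Mono ((HomologicalComplex.double f hij).d k j))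
  by_cases hj : k = j
  · subst hj
    rw [HomologicalComplex.exactAt_iff' _ i k _ (c.prev_eq' hij) rfl,
      ShortComplex.exact_iff_epi _ (HomologicalComplex.double_d_eq_zero₀ f hij _ _ hne.symm)]
    exact inferInstanceAs (Epi ((HomologicalComplex.double f hij).d i k))
  · exact .of_isZero (HomologicalComplex.isZero_double_X f hij k hi hj)

end Homology

section ShortExact

/-- The pullback `T.X₁ ⟶ X ×_{T.X₃} T.X₂ ⟶ X` of `T` along `f : X ⟶ T.X₃`. -/
noncomputable abbrev pullbackShortComplex (T : ShortComplex C) {X : C} (f : X ⟶ T.X₃) :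
    ShortComplex C :=
  .mk (pullback.lift (f := f) (g := T.g) 0 T.f (by simp)) (pullback.fst f T.g)
    (pullback.lift_fst _ _ _)

theorem pullbackShortComplex_shortExact {T : ShortComplex C} (hT : T.ShortExact) {X : C}
    (f : X ⟶ T.X₃) : (pullbackShortComplex T f).ShortExact := by
  have := hT.mono_f
  have := hT.epi_g
  have : Mono (pullbackShortComplex T f).f := mono_of_mono_fac (pullback.lift_snd _ _ _)
  refine ⟨ShortComplex.exact_of_f_is_kernel _ <| KernelFork.IsLimit.ofι' _ _ fun k hk ↦ ?_⟩
  refine ⟨hT.exact.lift (k ≫ pullback.snd f T.g) ?_, ?_⟩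
  · rw [Category.assoc, ← pullback.condition, reassoc_of% hk, zero_comp]
  · apply pullback.hom_ext
    · simpa [pullback.lift_fst] using hk.symm
    · simp [pullback.lift_snd]

theorem isPullback_of_mono_τ₃ {S T : ShortComplex C} (hS : S.Exact) [Mono S.f] [Mono T.f]
    (φ : S ⟶ T) [Mono φ.τ₃] : IsPullback S.f φ.τ₁ φ.τ₂ T.f := by
  refine ⟨⟨φ.comm₁₂.symm⟩, ⟨PullbackCone.IsLimit.mk _
    (fun s ↦ hS.lift s.fst ?_) (fun s ↦ ?_) (fun s ↦ ?_) (fun s m hm _ ↦ ?_)⟩⟩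
  · rw [← cancel_mono φ.τ₃, Category.assoc, ← φ.comm₂₃, s.condition_assoc, T.zero, comp_zero,
      zero_comp]
  · simp
  · simp [← cancel_mono T.f, ← s.condition, φ.comm₁₂]
  · simp [← cancel_mono S.f, hm]

theorem epi_desc_of_epi_τ₃ {S T : ShortComplex C} [Epi S.g] (hT : T.Exact) (φ : S ⟶ T) [Epi φ.τ₃]
    {E : C} (e : E ⟶ T.X₁) [Epi e] : Epi (biprod.desc φ.τ₂ (e ≫ T.f)) := by
  let ψ : ShortComplex.mk (biprod.inr : E ⟶ S.X₂ ⊞ E) biprod.fst (by simp) ⟶ T :=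
    { τ₁ := e
      τ₂ := biprod.desc φ.τ₂ (e ≫ T.f)
      τ₃ := S.g ≫ φ.τ₃
      comm₂₃ := by ext <;> simp [φ.comm₂₃] }
  exact ShortComplex.epi_of_epi_of_epi_of_epi ψ hT inferInstance ‹Epi e›
    (epi_comp S.g φ.τ₃)

end ShortExact

section Fibers

variable {𝒜 : C → Prop}

/-- Every pullback of `f` along an epimorphism from an object of `𝒜` lies in `𝒜`. This stands for
"the mapping fibre of `f` lies in `𝒜`", with every cover of `Y` allowed as a model of `Y`. -/
def HasFibersIn (𝒜 : C → Prop) {X Y : C} (f : X ⟶ Y) : Prop :=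
  ∀ (E : C) (e : E ⟶ Y), 𝒜 E → Epi e → 𝒜 (pullback f e)

theorem hasFibersIn_of_isIso (hadd : IsAdditiveClosed 𝒜) {X Y : C} (f : X ⟶ Y) [IsIso f] :
    HasFibersIn 𝒜 f :=
  fun _ e hE _ ↦ hadd.iso (asIso (pullback.snd f e)).symm hE

theorem HasFibersIn.mem_of_mem (hadd : IsAdditiveClosed 𝒜) {X Y : C} {f : X ⟶ Y}
    (hf : HasFibersIn 𝒜 f) (hY : 𝒜 Y) : 𝒜 X :=
  hadd.iso (asIso (pullback.fst f (𝟙 Y))) (hf Y (𝟙 Y) hY inferInstance)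

theorem HasFibersIn.mem_X₁ (hdef : DeflationClosed 𝒜) {T : ShortComplex C} (hT : T.ShortExact)
    (hT₂ : 𝒜 T.X₂) {X : C} {f : X ⟶ T.X₃} (hf : HasFibersIn 𝒜 f) (hX : 𝒜 X) : 𝒜 T.X₁ :=
  hdef (pullbackShortComplex T f) (pullbackShortComplex_shortExact hT f) (hf _ T.g hT₂ hT.epi_g) hX

theorem hasFibersIn_τ₁_of_isIso_τ₃ (hadd : IsAdditiveClosed 𝒜) (hdef : DeflationClosed 𝒜)
    {S T : ShortComplex C} (hS : S.ShortExact) (hT : T.ShortExact) (φ : S ⟶ T) [IsIso φ.τ₃]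
    (hS₂ : 𝒜 S.X₂) (hT₂ : 𝒜 T.X₂) : HasFibersIn 𝒜 φ.τ₁ := by
  intro E e hE _
  have := hS.mono_f
  have := hS.epi_g
  have := hT.mono_f
  have sq : IsPullback (pullback.fst φ.τ₁ e ≫ S.f) (pullback.snd φ.τ₁ e) φ.τ₂ (e ≫ T.f) :=
    (IsPullback.of_hasPullback φ.τ₁ e).paste_horiz (isPullback_of_mono_τ₃ hS.exact φ)
  have : Mono sq.shortComplex'.f := sq.mono_shortComplex'_f
  have : Epi sq.shortComplex'.g := by
    have := epi_desc_of_epi_τ₃ hT.exact φ (-e)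
    rwa [Preadditive.neg_comp] at this
  exact hdef sq.shortComplex' ⟨sq.exact_shortComplex'⟩ (hadd.biprod hS₂ hE) hT₂

theorem HasFibersIn.τ₁ (hadd : IsAdditiveClosed 𝒜) (hdef : DeflationClosed 𝒜)
    {S T : ShortComplex C} (hS : S.ShortExact) (hT : T.ShortExact) {φ : S ⟶ T}
    (hS₂ : 𝒜 S.X₂) (hT₂ : 𝒜 T.X₂) (hφ : HasFibersIn 𝒜 φ.τ₃) : HasFibersIn 𝒜 φ.τ₁ := by
  let ψ : S ⟶ pullbackShortComplex T φ.τ₃ :=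
    { τ₁ := φ.τ₁
      τ₂ := pullback.lift S.g φ.τ₂ φ.comm₂₃.symm
      τ₃ := 𝟙 S.X₃
      comm₁₂ := by apply pullback.hom_ext <;> simp [pullback.lift_fst, pullback.lift_snd, φ.comm₁₂]
      comm₂₃ := by simp [pullback.lift_fst] }
  have : IsIso ψ.τ₃ := inferInstanceAs (IsIso (𝟙 S.X₃))
  exact hasFibersIn_τ₁_of_isIso_τ₃ hadd hdef hS (pullbackShortComplex_shortExact hT φ.τ₃) ψ hS₂
    (hφ _ T.g hT₂ hT.epi_g)

theorem PR2.exists_epi_lift (hPR2 : PR2 𝒜) {X A Y : C} (f : X ⟶ Y) (p : A ⟶ Y) [Epi p] :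
    ∃ (D : C) (q : D ⟶ X) (a : D ⟶ A), 𝒜 D ∧ Epi q ∧ a ≫ p = q ≫ f := by
  obtain ⟨D, r, hD, _⟩ := hPR2 (pullback f p)
  exact ⟨D, r ≫ pullback.fst f p, r ≫ pullback.snd f p, hD, epi_comp _ _,
    by simp [pullback.condition]⟩

theorem exists_hom_of_comp_eq {U S : ShortComplex C} (hS : S.Exact) [Mono S.f]
    (f : U.X₃ ⟶ S.X₃) (a : U.X₂ ⟶ S.X₂) (h : a ≫ S.g = U.g ≫ f) : ∃ φ : U ⟶ S, φ.τ₃ = f :=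
  ⟨{ τ₁ := hS.lift (U.f ≫ a) (by simp [h]), τ₂ := a, τ₃ := f, comm₂₃ := h }, rfl⟩

theorem PR2.exists_shortExact_hom_hom (hPR2 : PR2 𝒜) {S T : ShortComplex C} (hS : S.ShortExact)
    (hT : T.ShortExact) {X : C} (f : X ⟶ S.X₃) (g : X ⟶ T.X₃) :
    ∃ (K D : C) (i : K ⟶ D) (q : D ⟶ X) (w : i ≫ q = 0), (ShortComplex.mk i q w).ShortExact ∧
      𝒜 D ∧ (∃ φ : ShortComplex.mk i q w ⟶ S, φ.τ₃ = f) ∧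
        ∃ ψ : ShortComplex.mk i q w ⟶ T, ψ.τ₃ = g := by
  have := hS.mono_f
  have := hS.epi_g
  have := hT.mono_f
  have := hT.epi_g
  obtain ⟨D₁, q₁, a, -, _, ha⟩ := hPR2.exists_epi_lift f S.g
  obtain ⟨D, q₂, b, hD, _, hb⟩ := hPR2.exists_epi_lift (q₁ ≫ g) T.g
  let U : ShortComplex C := .mk (kernel.ι (q₂ ≫ q₁)) (q₂ ≫ q₁) (kernel.condition _)
  exact ⟨_, D, U.f, U.g, U.zero,
    .mk' (ShortComplex.exact_kernel _) inferInstance (epi_comp q₂ q₁), hD,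
    exists_hom_of_comp_eq (U := U) hS.exact f (q₂ ≫ a) (by simp [U, ha]),
    exists_hom_of_comp_eq (U := U) hT.exact g b (by simp [U, hb])⟩

end Fibers

section Syzygies

variable {𝒜 : C → Prop}

/-- `Y'` is an `n`-th syzygy of `Y`: there is an exact sequence
`0 ⟶ Y' ⟶ Aₙ₋₁ ⟶ ⋯ ⟶ A₀ ⟶ Y ⟶ 0` with all `Aᵢ` in `𝒜`, encoded as spliced short exact sequences.
-/
inductive IsSyzygy_s10 (𝒜 : C → Prop) : ℕ → C → C → Prop
  | zero {Y Y' : C} (e : Y ≅ Y') : IsSyzygy_s10 𝒜 0 Y Y'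
  | succ {n : ℕ} {S : ShortComplex C} {Y' : C} (hS : S.ShortExact) (hS₂ : 𝒜 S.X₂)
      (h : IsSyzygy_s10 𝒜 n S.X₁ Y') : IsSyzygy_s10 𝒜 (n + 1) S.X₃ Y'

theorem IsSyzygy_s10.of_iso {n : ℕ} {X Y Y' : C} (h : IsSyzygy_s10 𝒜 n Y Y') (e : X ≅ Y) :
    IsSyzygy_s10 𝒜 n X Y' := by
  cases h with
  | zero e' => exact .zero (e ≪≫ e')
  | @succ n S _ hS hS₂ h =>
    let S' : ShortComplex C := .mk S.f (S.g ≫ e.inv) (by simp)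
    let eS : S ≅ S' := ShortComplex.isoMk (Iso.refl _) (Iso.refl _) e.symm
    have hS' : S'.ShortExact := ShortComplex.shortExact_of_iso eS hS
    exact .succ hS' hS₂ h

theorem IsSyzygy_s10.mem (hadd : IsAdditiveClosed 𝒜) (hdef : DeflationClosed 𝒜) {n : ℕ} {Y Y' : C}
    (h : IsSyzygy_s10 𝒜 n Y Y') (hY : 𝒜 Y) : 𝒜 Y' := by
  induction h with
  | zero e => exact hadd.iso e hY
  | succ hS hS₂ _ ih => exact ih (hdef _ hS hS₂ hY)

theorem IsSyzygy_s10.mem_of_hasFibersIn (hadd : IsAdditiveClosed 𝒜) (hdef : DeflationClosed 𝒜)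
    (hPR2 : PR2 𝒜) {n m : ℕ} {X Y₁ Y₁' Y₂ Y₂' : C} (h₁ : IsSyzygy_s10 𝒜 n Y₁ Y₁') (hY₁' : 𝒜 Y₁')
    (h₂ : IsSyzygy_s10 𝒜 m Y₂ Y₂') (hnm : n < m) {f₁ : X ⟶ Y₁} {f₂ : X ⟶ Y₂}
    (hf₁ : HasFibersIn 𝒜 f₁) (hf₂ : HasFibersIn 𝒜 f₂) : 𝒜 Y₂' := by
  induction h₁ generalizing X Y₂ m with
  | zero e =>
    cases h₂ with
    | zero => lia
    | succ hT hT₂ h₂ =>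
      have hX : 𝒜 X := hf₁.mem_of_mem hadd (hadd.iso e.symm hY₁')
      exact h₂.mem hadd hdef (hf₂.mem_X₁ hdef hT hT₂ hX)
  | succ hS hS₂ _ ih =>
    cases h₂ with
    | zero => lia
    | succ hT hT₂ h₂ =>
      obtain ⟨K, D, i, q, w, hU, hD, ⟨φ, rfl⟩, ψ, rfl⟩ :=
        hPR2.exists_shortExact_hom_hom hS hT f₁ f₂
      exact ih hY₁' h₂ (by lia) (hf₁.τ₁ hadd hdef hU hS hD hS₂) (hf₂.τ₁ hadd hdef hU hT hD hT₂)

theorem isSyzygy_cycles {K : CochainComplex C ℤ} {n : ℕ} {k l : ℤ} (hkl : k + n = l)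
    (hA : ∀ j, k ≤ j → j < l → 𝒜 (K.X j)) (hK : ∀ j, k < j → j ≤ l → K.ExactAt j) :
    IsSyzygy_s10 𝒜 n (K.cycles l) (K.cycles k) := by
  induction n generalizing l with
  | zero =>
    obtain rfl : k = l := by simpa using hkl
    exact .zero (Iso.refl _)
  | succ n ih =>
    push_cast at hkl
    have hS := cyclesShortComplex_shortExact (i := l - 1) (by simp) (hK l (by lia) le_rfl)
    refine .succ hS (hA _ (by lia) (by lia)) (ih (by lia) ?_ ?_)
    · exact fun j hkj hj ↦ hA j hkj (by lia)
    · exact fun j hkj hj ↦ hK j hkj (by lia)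

end Syzygies

section ResolutionDimension

variable {𝒜 : C → Prop}

theorem IsResolutionOfLength.exists_isSyzygy (hadd : IsAdditiveClosed 𝒜) {n : ℕ} {Y : C}
    (h : IsResolutionOfLength 𝒜 Y n) : ∃ Y', 𝒜 Y' ∧ IsSyzygy_s10 𝒜 n Y Y' := by
  obtain ⟨R, e, hpos, hneg, hA, hR⟩ := h
  have hZ : IsZero (R.cycles (-n)) := by
    have := epi_toCycles_of_exactAt_s10 (i := -(n : ℤ) - 1) (by simp) (hR (-n))
    exact .of_epi (R.toCycles (-n - 1) (-n)) (hneg _ (by lia))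
  have hS := cyclesShortComplex_shortExact (i := -(n : ℤ)) rfl (hR (-n + 1))
  have : IsIso (R.toCycles (-n) (-n + 1)) := hS.isIso_g_iff.2 hZ
  have : IsIso (R.iCycles 1) :=
    R.isIso_iCycles 1 2 (by simp) ((hpos 2 (by simp)).eq_of_tgt _ _)
  have hY : IsSyzygy_s10 𝒜 n (R.cycles 1) (R.cycles (-n + 1)) :=
    isSyzygy_cycles (by lia) (fun j hj hj' ↦ hA j (by lia) (by lia)) (fun j _ _ ↦ hR j)
  exact ⟨_, hadd.iso (asIso (R.toCycles (-n) (-n + 1))) (hA _ le_rfl (by simp)),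
    hY.of_iso (e.symm ≪≫ (asIso (R.iCycles 1)).symm)⟩

theorem exists_isResolutionOfLength_of_resdim_lt {Y : C} {m : ℕ∞} (h : resdim 𝒜 Y < m) :
    ∃ n : ℕ, (n : ℕ∞) < m ∧ IsResolutionOfLength 𝒜 Y n := by
  obtain ⟨_, ⟨n, rfl, hn⟩, hnm⟩ := sInf_lt_iff.1 h
  exact ⟨n, hnm, hn⟩

theorem IsSyzygy_s10.mem_of_resdim_lt (hadd : IsAdditiveClosed 𝒜) (hdef : DeflationClosed 𝒜)
    (hPR2 : PR2 𝒜) {m : ℕ} {Y Y' : C} (h : IsSyzygy_s10 𝒜 m Y Y') (hY : resdim 𝒜 Y < m) : 𝒜 Y' := by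
  obtain ⟨n, hnm, hn⟩ := exists_isResolutionOfLength_of_resdim_lt hY
  obtain ⟨Z, hZ, hYZ⟩ := hn.exists_isSyzygy hadd
  exact hYZ.mem_of_hasFibersIn hadd hdef hPR2 hZ h (by exact_mod_cast hnm)
    (hasFibersIn_of_isIso hadd (𝟙 Y)) (hasFibersIn_of_isIso hadd (𝟙 Y))

theorem isResolutionOfLength_zero (hadd : IsAdditiveClosed 𝒜) {Y : C} (hY : 𝒜 Y) :
    IsResolutionOfLength 𝒜 Y 0 := by
  have h : (ComplexShape.up ℤ).Rel 0 1 := by simp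
  refine ⟨HomologicalComplex.double (𝟙 Y) h, HomologicalComplex.doubleXIso₁ _ h zero_ne_one,
    fun k hk ↦ ?_, fun k hk ↦ ?_, fun k hk hk' ↦ ?_, acyclic_double_of_isIso_s10 _ h zero_ne_one⟩
  · exact HomologicalComplex.isZero_double_X _ h k (by lia) (by lia)
  · exact HomologicalComplex.isZero_double_X _ h k (by lia) (by lia)
  · obtain rfl : k = 0 := by lia
    exact hadd.iso (HomologicalComplex.doubleXIso₀ _ h).symm hY

theorem resdim_eq_zero_of_mem (hadd : IsAdditiveClosed 𝒜) {Y : C} (hY : 𝒜 Y) : resdim 𝒜 Y = 0 :=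
  nonpos_iff_eq_zero.1 (sInf_le ⟨0, rfl, isResolutionOfLength_zero hadd hY⟩)

end ResolutionDimension

theorem image_resdim_le_one_of_acyclic_general {𝒜 : C → Prop} (hadd : IsAdditiveClosed 𝒜)
    (hdef : DeflationClosed 𝒜) (hPR2 : PR2 𝒜) {E : CochainComplex C ℤ} {l : ℤ}
    (hterms : ∀ k, l < k → 𝒜 (E.X k)) (hacy : ∀ k, l < k → E.ExactAt k) {m : ℕ}
    (hres : resdim 𝒜 (image (E.d (l + m) (l + m + 1))) < m) : 𝒜 (image (E.d l (l + 1))) := by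
  have hsyz : IsSyzygy_s10 𝒜 m (E.cycles (l + m + 1)) (E.cycles (l + 1)) :=
    isSyzygy_cycles (by lia) (fun k hk _ ↦ hterms k (by lia)) (fun k hk _ ↦ hacy k (by lia))
  have hcycles : 𝒜 (E.cycles (l + 1)) :=
    (hsyz.of_iso (cyclesIsoImage rfl (hacy _ (by lia))).symm).mem_of_resdim_lt hadd hdef hPR2 hres
  exact hadd.iso (cyclesIsoImage rfl (hacy _ (by lia))) hcycles

/-- If `𝒜` is preresolving with `resdim_𝒜 (C) = n` finite and `E•` is an acyclic cochain
complex with all terms in `𝒜`, then for every `l` there is `B ∈ 𝒜` with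
`im(d_E^l) ⊞ B ∈ 𝒜`; in particular `resdim_𝒜 (im(d_E^l)) ≤ 1`. -/
theorem image_resdim_le_one_of_acyclic
    (𝒜 : C → Prop) (hadd : IsAdditiveClosed 𝒜)
    (hdef : DeflationClosed 𝒜) (hPR2 : PR2 𝒜)
    (n : ℕ) (hres : resdimCat 𝒜 = (n : ℕ∞))
    (E : CochainComplex C ℤ) (hterms : ∀ k : ℤ, 𝒜 (E.X k))
    (hacy : ∀ k : ℤ, E.ExactAt k) (l : ℤ) :
    (∃ B : C, 𝒜 B ∧ 𝒜 (image (E.d l (l + 1)) ⊞ B)) ∧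
      resdim 𝒜 (image (E.d l (l + 1))) ≤ (1 : ℕ∞) := by
  have hres' (X : C) : resdim 𝒜 X < (n + 1 : ℕ) :=
    (le_iSup (resdim 𝒜) X).trans_lt (hres.trans_lt (by exact_mod_cast n.lt_succ_self))
  have hI : 𝒜 (image (E.d l (l + 1))) := image_resdim_le_one_of_acyclic_general hadd hdef hPR2
    (fun k _ ↦ hterms k) (fun k _ ↦ hacy k) (hres' _)
  exact ⟨⟨0, hadd.zero, hadd.biprod hI hadd.zero⟩,
    (resdim_eq_zero_of_mem hadd hI).trans_le zero_le_one⟩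
end

section
/- Let 𝒞 be an abelian category and let 𝒜 be a full additive subcategory of 𝒞. If 0 → K → B →^g C → 0 and 0 → L → A →^h B → 0 are 𝒜-conflations, then the composite epimorphism g ∘ h : A ↠ C has its kernel P in 𝒜, and the short exact sequence 0 → P → A → C → 0 is again an 𝒜-conflation. (In particular, the 𝒜-conflations define a deflation-exact structure on 𝒜.) -/
open CategoryTheory CategoryTheory.Limits ZeroObject

universe v u

variable {C : Type u} [Category.{v} C] [Abelian C]

/-- A short exact sequence `0 → A → B → C → 0` in `C` with all terms in `𝒜` is an
`𝒜`-conflation if for every morphism `h : D ⟶ C` with `D ∈ 𝒜`, the pullback of the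
epimorphism along `h` lies in `𝒜`. -/
def IsAConflation (𝒜 : C → Prop) (S : ShortComplex C) : Prop :=
  S.ShortExact ∧ 𝒜 S.X₁ ∧ 𝒜 S.X₂ ∧ 𝒜 S.X₃ ∧
    ∀ (D : C) (h : D ⟶ S.X₃), 𝒜 D → 𝒜 (pullback S.g h)

/-!
Pasting pullback squares shows that the pullback of `h ≫ g` along `d` is the pullback of `h` along
the projection `pullback.fst g d`, so the condition on pullbacks in `IsAConflation` is stable under
composition.
This condition already controls the other terms of the sequence: pulling back a morphism along the
identity of its target returns its source, and pulling it back along `0` returns its kernel.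
-/

section Pullbacks

variable {E : Type u} [Category.{v} E]

lemma isPullback_of_isLimit_kernelFork [HasZeroMorphisms E] {K X Y O : E} {i : K ⟶ X} {g : X ⟶ Y}
    {w : i ≫ g = 0} (hi : IsLimit (KernelFork.ofι i w)) (hO : IsZero O) :
    IsPullback i (0 : K ⟶ O) g 0 where
  w := by rw [w, zero_comp]
  isLimit' := by
    have fst_comp (s : PullbackCone g (0 : O ⟶ Y)) : s.fst ≫ g = 0 := by
      rw [s.condition, comp_zero]
    let lift (s : PullbackCone g (0 : O ⟶ Y)) := KernelFork.IsLimit.lift' hi s.fst (fst_comp s)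
    exact ⟨PullbackCone.IsLimit.mk _ (fun s ↦ (lift s).1) (fun s ↦ (lift s).2)
      (fun s ↦ hO.eq_of_tgt _ _)
      (fun s m hm _ ↦ Fork.IsLimit.hom_ext hi (hm.trans (lift s).2.symm))⟩

variable [HasPullbacks E]

/-- The morphisms `g` for which the pullback object of `g` along any morphism from an object
of `𝒜` lies in `𝒜`. This is the condition imposed on the deflation in `IsAConflation`; the source
and the target of `g` are not required to lie in `𝒜`. -/
def pullbacksIn (𝒜 : ObjectProperty E) : MorphismProperty E :=
  fun _ Y g ↦ ∀ (D : E) (d : D ⟶ Y), 𝒜 D → 𝒜 (pullback g d)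

namespace pullbacksIn

variable {𝒜 : ObjectProperty E} [𝒜.IsClosedUnderIsomorphisms]

lemma prop_of_isPullback {P D X Y : E} {fst : P ⟶ X} {snd : P ⟶ D} {g : X ⟶ Y} {d : D ⟶ Y}
    (hg : pullbacksIn 𝒜 g) (sq : IsPullback fst snd g d) (hD : 𝒜 D) : 𝒜 P :=
  𝒜.prop_of_iso sq.isoPullback.symm (hg D d hD)

lemma prop_source {X Y : E} {g : X ⟶ Y} (hg : pullbacksIn 𝒜 g) (hY : 𝒜 Y) : 𝒜 X :=
  hg.prop_of_isPullback IsPullback.of_id_fst hY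

lemma prop_of_isLimit_kernelFork [HasZeroMorphisms E] [𝒜.ContainsZero] {K X Y : E} {i : K ⟶ X}
    {g : X ⟶ Y} {w : i ≫ g = 0} (hg : pullbacksIn 𝒜 g) (hi : IsLimit (KernelFork.ofι i w)) :
    𝒜 K :=
  have ⟨_, hO, h𝒜O⟩ := 𝒜.exists_prop_of_containsZero
  hg.prop_of_isPullback (isPullback_of_isLimit_kernelFork hi hO) h𝒜O

instance : (pullbacksIn 𝒜).IsStableUnderComposition where
  comp_mem h g hh hg D d hD := by
    have sq : IsPullback (pullback.fst h (pullback.fst g d))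
        (pullback.snd h (pullback.fst g d) ≫ pullback.snd g d) (h ≫ g) d :=
      (IsPullback.of_hasPullback h (pullback.fst g d)).paste_vert (IsPullback.of_hasPullback g d)
    exact 𝒜.prop_of_iso sq.isoPullback (hh _ _ (hg D d hD))

end pullbacksIn

end Pullbacks

section Conflations

variable {𝒜 : ObjectProperty C}

lemma isAConflation_iff [𝒜.IsClosedUnderIsomorphisms] [𝒜.ContainsZero] {S : ShortComplex C} :
    IsAConflation 𝒜 S ↔ S.ShortExact ∧ 𝒜 S.X₃ ∧ pullbacksIn 𝒜 S.g where
  mp := fun ⟨hS, _, _, hX₃, hg⟩ ↦ ⟨hS, hX₃, hg⟩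
  mpr := fun ⟨hS, hX₃, hg⟩ ↦
    ⟨hS, hg.prop_of_isLimit_kernelFork hS.fIsKernel, hg.prop_source hX₃, hX₃, hg⟩

lemma shortExact_kernel {X Y : C} (g : X ⟶ Y) [Epi g] :
    (ShortComplex.mk (kernel.ι g) g (kernel.condition g)).ShortExact where
  exact := ShortComplex.exact_kernel g

theorem isAConflation_comp_general [𝒜.IsClosedUnderIsomorphisms] [𝒜.ContainsZero]
    {K B Z L A : C} {iK : K ⟶ B} {g : B ⟶ Z} {w₁ : iK ≫ g = 0}
    {iL : L ⟶ A} {h : A ⟶ B} {w₂ : iL ≫ h = 0}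
    (h₁ : IsAConflation 𝒜 (ShortComplex.mk iK g w₁))
    (h₂ : IsAConflation 𝒜 (ShortComplex.mk iL h w₂)) :
    IsAConflation 𝒜
      (ShortComplex.mk (kernel.ι (h ≫ g)) (h ≫ g) (kernel.condition (h ≫ g))) := by
  obtain ⟨exact_g, hZ, hg⟩ := isAConflation_iff.mp h₁
  obtain ⟨exact_h, -, hh⟩ := isAConflation_iff.mp h₂
  have : Epi g := exact_g.epi_g
  have : Epi h := exact_h.epi_g
  exact isAConflation_iff.mpr
    ⟨shortExact_kernel (h ≫ g), hZ, (pullbacksIn 𝒜).comp_mem h g hh hg⟩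

namespace IsAdditiveClosed

lemma isClosedUnderIsomorphisms (hadd : IsAdditiveClosed 𝒜) : 𝒜.IsClosedUnderIsomorphisms where
  of_iso := hadd.iso

lemma containsZero (hadd : IsAdditiveClosed 𝒜) : 𝒜.ContainsZero where
  exists_zero := ⟨0, isZero_zero C, hadd.zero⟩

end IsAdditiveClosed

end Conflations

/-- Compositions of `𝒜`-deflations are `𝒜`-deflations: given `𝒜`-conflations
`0 → K → B → C → 0` (with deflation `g`) and `0 → L → A → B → 0` (with deflation `h`),
the kernel `P` of `h ≫ g` lies in `𝒜` and `0 → P → A → C → 0` is again an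
`𝒜`-conflation.  (Hence the `𝒜`-conflations form a deflation-exact structure on `𝒜`.) -/
theorem isAConflation_comp
    (𝒜 : C → Prop) (hadd : IsAdditiveClosed 𝒜)
    {K B Z L A : C} (iK : K ⟶ B) (g : B ⟶ Z) (w₁ : iK ≫ g = 0)
    (iL : L ⟶ A) (h : A ⟶ B) (w₂ : iL ≫ h = 0)
    (h₁ : IsAConflation 𝒜 (ShortComplex.mk iK g w₁))
    (h₂ : IsAConflation 𝒜 (ShortComplex.mk iL h w₂)) :
    𝒜 (kernel (h ≫ g)) ∧
      IsAConflation 𝒜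
        (ShortComplex.mk (kernel.ι (h ≫ g)) (h ≫ g) (kernel.condition (h ≫ g))) := by
  have := hadd.isClosedUnderIsomorphisms
  have := hadd.containsZero
  have hcomp := isAConflation_comp_general h₁ h₂
  exact ⟨hcomp.2.1, hcomp⟩
end

section
/- Let 𝒞 be an abelian category and let 𝒜 be a full additive subcategory satisfying (C2'). Then for every short exact sequence 0 → X → Y → Z → 0 in 𝒞 with Y and Z in 𝒜, there exists an object B in 𝒜 such that X ⊕ B lies in 𝒜. -/
open CategoryTheory CategoryTheory.Limits ZeroObject

universe v u

variable {C : Type u} [Category.{v} C] [Abelian C]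

/-- Axiom (C2'): every short exact sequence `0 → X → Y → C → 0` with `C ∈ 𝒜` receives a
morphism from an `𝒜`-conflation `0 → A → B → C → 0` over the identity of `C`. -/
def C2' (𝒜 : C → Prop) : Prop :=
  ∀ ⦃X Y Z : C⦄ (i : X ⟶ Y) (p : Y ⟶ Z) (w : i ≫ p = 0),
    (ShortComplex.mk i p w).ShortExact → 𝒜 Z →
    ∃ (A B : C) (i' : A ⟶ B) (p' : B ⟶ Z) (w' : i' ≫ p' = 0)
      (a : A ⟶ X) (b : B ⟶ Y),
      IsAConflation 𝒜 (ShortComplex.mk i' p' w') ∧ i' ≫ b = a ≫ i ∧ b ≫ p = p'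

/- A lift `b : B ⟶ Y` of the epimorphism `B ⟶ Z` of the conflation supplied by (C2') identifies
the pullback of `B ⟶ Z` and `Y ⟶ Z` with `X ⊞ B`: given compatible maps `f` to `B` and `g` to `Y`,
the difference `g - f ≫ b` factors through the kernel `X`. The conflation property, applied to
`Y ⟶ Z` itself, puts this pullback in `𝒜`. -/

section Preadditive

variable {D : Type*} [Category* D] [Preadditive D]

lemma isPullback_biprod_snd_desc {X Y Z B : D} [HasBinaryBiproduct X B]
    {i : X ⟶ Y} {p : Y ⟶ Z} {w : i ≫ p = 0}
    (hi : IsLimit (KernelFork.ofι i w)) (b : B ⟶ Y) :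
    IsPullback (biprod.snd : X ⊞ B ⟶ B) (biprod.desc i b) (b ≫ p) p := by
  have : Mono i := mono_of_isLimit_fork hi
  have exists_lift (s : PullbackCone (b ≫ p) p) : ∃ l : s.pt ⟶ X, l ≫ i = s.snd - s.fst ≫ b :=
    ⟨_, (KernelFork.IsLimit.lift' hi _ (by simp [s.condition])).2⟩
  choose l hl using exists_lift
  refine ⟨⟨by ext <;> simp [w]⟩, ⟨PullbackCone.IsLimit.mk _ (fun s ↦ biprod.lift (l s) s.fst)
    (fun s ↦ biprod.lift_snd _ _) (fun s ↦ by simp [biprod.lift_desc, hl]) ?_⟩⟩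
  intro s m hfst hsnd
  have hm : m ≫ biprod.fst ≫ i = l s ≫ i := by
    rw [hl, ← hsnd, ← hfst, biprod.desc_eq]
    simp
  ext
  · simpa [← cancel_mono i] using hm
  · simpa using hfst

end Preadditive

lemma IsAConflation.biprod_mem {𝒜 : ObjectProperty C} [𝒜.IsClosedUnderIsomorphisms]
    {S : ShortComplex C} (hS : IsAConflation 𝒜 S) {X Y : C} {i : X ⟶ Y} {p : Y ⟶ S.X₃}
    {w : i ≫ p = 0} (hi : IsLimit (KernelFork.ofι i w)) (hY : 𝒜 Y)
    {b : S.X₂ ⟶ Y} (hb : b ≫ p = S.g) :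
    𝒜 (X ⊞ S.X₂) := by
  obtain ⟨-, -, -, -, pullback_mem⟩ := hS
  have isPullback : IsPullback biprod.snd (biprod.desc i b) S.g p :=
    hb ▸ isPullback_biprod_snd_desc hi b
  exact 𝒜.prop_of_iso isPullback.isoPullback.symm (pullback_mem Y p hY)

theorem exists_biprod_mem_of_C2'_general
    (𝒜 : ObjectProperty C) [𝒜.IsClosedUnderIsomorphisms] (hC2 : C2' 𝒜)
    {X Y Z : C} (i : X ⟶ Y) (p : Y ⟶ Z) (w : i ≫ p = 0)
    (hse : (ShortComplex.mk i p w).ShortExact) (hY : 𝒜 Y) (hZ : 𝒜 Z) :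
    ∃ B : C, 𝒜 B ∧ 𝒜 (X ⊞ B) := by
  obtain ⟨_, B, _, _, _, _, b, hconf, -, hb⟩ := hC2 i p w hse hZ
  exact ⟨B, hconf.2.2.1, hconf.biprod_mem hse.fIsKernel hY hb⟩

/-- If `𝒜` satisfies (C2'), then for every short exact sequence `0 → X → Y → Z → 0` with
`Y, Z ∈ 𝒜` there is `B ∈ 𝒜` with `X ⊞ B ∈ 𝒜`. -/
theorem exists_biprod_mem_of_C2'
    (𝒜 : C → Prop) (hadd : IsAdditiveClosed 𝒜) (hC2 : C2' 𝒜)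
    {X Y Z : C} (i : X ⟶ Y) (p : Y ⟶ Z) (w : i ≫ p = 0)
    (hse : (ShortComplex.mk i p w).ShortExact) (hY : 𝒜 Y) (hZ : 𝒜 Z) :
    ∃ B : C, 𝒜 B ∧ 𝒜 (X ⊞ B) := by
  have : ObjectProperty.IsClosedUnderIsomorphisms 𝒜 := ⟨hadd.iso⟩
  exact exists_biprod_mem_of_C2'_general 𝒜 hC2 i p w hse hY hZ
end

section
/- Let 𝒞 be an abelian category and let 𝒜 be a full additive subcategory satisfying (C2'). Then for every short exact sequence 0 → X →^i Y →^p Z → 0 in 𝒞 with X, Y and Z in 𝒜, there exists an object B in 𝒜 such that the short exact sequence 0 → X ⊕ B →^{diag(i, 1_B)} Y ⊕ B →^{(p, 0)} Z → 0 is an 𝒜-conflation. -/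
open CategoryTheory CategoryTheory.Limits ZeroObject

universe v u

variable {C : Type u} [Category.{v} C] [Abelian C]

/-!
Let `b : B ⟶ Y` be the comparison map from an `𝒜`-conflation `B ⟶ Z` provided by (C2') to the given
`p : Y ⟶ Z`. The shear automorphism of `Y ⊞ B` defined by `b` turns `(p, 0)` into `(p, b ≫ p)`. The
pullback of `(p, b ≫ p)` along `h : D ⟶ Z` is also the pullback of the conflation `b ≫ p` along
`(h, -p) : D ⊞ Y ⟶ Z`, because `p y + p (b x) = h d` if and only if `p (b x) = h d - p y`. As
`D ⊞ Y` lies in `𝒜`, so does this pullback.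
-/

section Preadditive

variable {𝒟 : Type*} [Category* 𝒟] [Preadditive 𝒟] [HasBinaryBiproducts 𝒟]

lemma isPullback_desc_neg_of_isPullback_desc {P X Y Z W : 𝒟} {f : X ⟶ Z} {g : Y ⟶ Z} {h : W ⟶ Z}
    {s : P ⟶ X ⊞ Y} {t : P ⟶ W} (sq : IsPullback s t (biprod.desc f g) h) :
    IsPullback (s ≫ biprod.snd) (biprod.lift t (s ≫ biprod.fst)) g (biprod.desc h (-f)) := by
  have comm_iff {V : 𝒟} (x : V ⟶ X) (y : V ⟶ Y) (z : V ⟶ W) :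
      biprod.lift x y ≫ biprod.desc f g = z ≫ h ↔
        y ≫ g = biprod.lift z x ≫ biprod.desc h (-f) := by
    simp only [biprod.lift_desc, Preadditive.comp_neg, ← sub_eq_add_neg, eq_sub_iff_add_eq']
  refine ⟨⟨?_⟩, ⟨PullbackCone.IsLimit.mk _
    (fun c => sq.lift (biprod.lift (c.snd ≫ biprod.snd) c.fst) (c.snd ≫ biprod.fst) ?_)
    (fun c => ?fac_fst) (fun c => ?fac_snd) (fun c m hfst hsnd => ?uniq)⟩⟩
  · rw [← comm_iff]
    convert sq.w using 2
    ext <;> simp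
  · rw [comm_iff]
    convert c.condition using 2
    ext <;> simp
  case fac_fst => simp
  case fac_snd => ext <;> simp
  case uniq =>
    apply sq.hom_ext
    · ext <;> simp [← hfst, ← hsnd]
    · simp [← hsnd]

lemma unipotentLower_hom_comp_desc {X Y Z : 𝒟} (r : Y ⟶ X) (f : X ⟶ Z) (g : Y ⟶ Z) :
    (Biprod.unipotentLower r).hom ≫ biprod.desc f g = biprod.desc f (r ≫ f + g) := by
  ext <;> simp [Biprod.unipotentLower, Biprod.ofComponents]

lemma biprod_map_id_comp_desc_zero {X Y Z : 𝒟} {i : X ⟶ Y} {p : Y ⟶ Z} (w : i ≫ p = 0) (B : 𝒟) :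
    biprod.map i (𝟙 B) ≫ biprod.desc p 0 = 0 := by
  ext <;> simp [w]

lemma shortExact_biprod_map_id_desc_zero [Balanced 𝒟] [CategoryWithHomology 𝒟]
    {S : ShortComplex 𝒟} (hS : S.ShortExact) (B : 𝒟) :
    (ShortComplex.mk (biprod.map S.f (𝟙 B)) (biprod.desc S.g 0)
      (biprod_map_id_comp_desc_zero S.zero B)).ShortExact := by
  have := hS.mono_f
  have := hS.epi_g
  refine .mk' (ShortComplex.exact_of_f_is_kernel _ (KernelFork.IsLimit.ofι' _ _ fun k hk => ?_))
    (inferInstanceAs (Mono (biprod.map S.f (𝟙 B)))) (inferInstanceAs (Epi (biprod.desc S.g 0)))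
  have hk_fst : (k ≫ biprod.fst) ≫ S.g = 0 := by simpa [biprod.desc_eq] using hk
  exact ⟨biprod.lift (hS.exact.lift _ hk_fst) (k ≫ biprod.snd), by ext <;> simp⟩

end Preadditive

/-- All pullbacks of `g` along morphisms from objects of `𝒜` lie in `𝒜`. This is the last clause of
`IsAConflation`, as a condition on an arbitrary morphism. -/
def PullbacksMem (𝒜 : C → Prop) {Y Z : C} (g : Y ⟶ Z) : Prop :=
  ∀ (D : C) (h : D ⟶ Z), 𝒜 D → 𝒜 (pullback g h)

namespace PullbacksMem

variable {𝒜 : C → Prop} {X Y Z : C} {g : Y ⟶ Z}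

lemma iso_hom_comp (hadd : IsAdditiveClosed 𝒜) (hg : PullbacksMem 𝒜 g) (e : X ≅ Y) :
    PullbacksMem 𝒜 (e.hom ≫ g) := fun D h hD =>
  hadd.iso (asIso (pullback.map (e.hom ≫ g) h g h e.hom (𝟙 D) (𝟙 Z) (by simp) (by simp))).symm
    (hg D h hD)

lemma biprod_desc (hadd : IsAdditiveClosed 𝒜) (hg : PullbacksMem 𝒜 g) (hX : 𝒜 X) (f : X ⟶ Z) :
    PullbacksMem 𝒜 (biprod.desc f g) := fun D h hD =>
  hadd.iso (isPullback_desc_neg_of_isPullback_desc (.of_hasPullback _ h)).isoPullback.symm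
    (hg (D ⊞ X) (biprod.desc h (-f)) (hadd.biprod hD hX))

lemma biprod_desc_zero (hadd : IsAdditiveClosed 𝒜) {p : X ⟶ Z} {b : Y ⟶ X}
    (hbp : PullbacksMem 𝒜 (b ≫ p)) (hX : 𝒜 X) :
    PullbacksMem 𝒜 (biprod.desc p (0 : Y ⟶ Z)) := by
  have shear : (Biprod.unipotentLower (-b)).hom ≫ biprod.desc p (b ≫ p) = biprod.desc p 0 := by
    rw [unipotentLower_hom_comp_desc, Preadditive.neg_comp, neg_add_cancel]
  rw [← shear]
  exact (hbp.biprod_desc hadd hX p).iso_hom_comp hadd _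

end PullbacksMem

/-- If `𝒜` satisfies (C2'), then for every short exact sequence `0 → X → Y → Z → 0` with
`X, Y, Z ∈ 𝒜` there is `B ∈ 𝒜` such that
`0 → X ⊞ B → Y ⊞ B → Z → 0` (with maps `i ⊞ 𝟙 B` and `(p, 0)`) is an `𝒜`-conflation. -/
theorem exists_biprod_isAConflation_of_C2'
    (𝒜 : C → Prop) (hadd : IsAdditiveClosed 𝒜) (hC2 : C2' 𝒜)
    {X Y Z : C} (i : X ⟶ Y) (p : Y ⟶ Z) (w : i ≫ p = 0)
    (hse : (ShortComplex.mk i p w).ShortExact)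
    (hX : 𝒜 X) (hY : 𝒜 Y) (hZ : 𝒜 Z) :
    ∃ B : C, 𝒜 B ∧
      IsAConflation 𝒜
        (ShortComplex.mk (biprod.map i (𝟙 B)) (biprod.desc p 0)
          (by apply biprod.hom_ext' <;> simp [reassoc_of% w, w])) := by
  obtain ⟨_, B, _, _, _, _, b, ⟨_, _, hB, _, hbp⟩, _, rfl⟩ := hC2 i p w hse hZ
  have hp : PullbacksMem 𝒜 (biprod.desc p (0 : B ⟶ Z)) :=
    PullbacksMem.biprod_desc_zero hadd hbp hY
  exact ⟨B, hB, shortExact_biprod_map_id_desc_zero hse B, hadd.biprod hX hB, hadd.biprod hY hB,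
    hZ, hp⟩
end

section
/- Let p be a prime number. For every abelian group M there exist an abelian group A containing no element of order p² and a surjective group homomorphism f : A → M whose kernel contains no element of order p². Hence the Isbell category ℐ is a preresolving subcategory of Ab with resdim_ℐ(Ab) ≤ 1. -/
universe u

theorem isbell_preresolving_general (M : Type u) [AddCommGroup M] :
    ∃ (A : Type u) (_ : AddCommGroup A) (f : A →+ M),
      Function.Surjective f ∧ IsAddTorsionFree A :=
  ⟨M →₀ ℤ, inferInstance, (Finsupp.linearCombination ℤ (id : M → M)).toAddMonoidHom,
    Finsupp.linearCombination_id_surjective ℤ M, inferInstance⟩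

/-- For every abelian group `M` there exist an abelian group `A` with no element of
(additive) order `p²` and a surjective group homomorphism `f : A → M` whose kernel has
no element of order `p²`.  Hence the Isbell category `ℐ` (abelian groups with no element
of order `p²`) is a preresolving subcategory of `Ab` with `resdim_ℐ (Ab) ≤ 1`. -/
theorem isbell_preresolving (p : ℕ) (hp : p.Prime)
    (M : Type u) [AddCommGroup M] :
    ∃ (A : Type u) (_ : AddCommGroup A) (f : A →+ M),
      Function.Surjective f ∧
      (∀ a : A, addOrderOf a ≠ p ^ 2) ∧
      (∀ a : A, f a = 0 → addOrderOf a ≠ p ^ 2) := by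
  obtain ⟨A, _, f, hf, _⟩ := isbell_preresolving_general M
  have addOrderOf_le_one (a : A) : addOrderOf a ≤ 1 := IsAddTorsionFree.addOrderOf_nonpos a
  have addOrderOf_ne (a : A) : addOrderOf a ≠ p ^ 2 :=
    ((addOrderOf_le_one a).trans_lt (Nat.one_lt_pow two_ne_zero hp.one_lt)).ne
  exact ⟨A, inferInstance, f, hf, addOrderOf_ne, fun a _ => addOrderOf_ne a⟩
end
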